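/- arXiv:2201.03142 — 8 statements merged into one kernel-verified Lean document; each statement's English description precedes it below -/
import Mathlib

section
/- Let F1 and F2 be families of connected graphs and let G be a graph. Then the following are equivalent: (1) every connected component of G is F1-free or F2-free; (2) G is sp(F1,F2)-free, and there is no connected component C of G and no pair (H1,H2) ∈ Fp(F1,F2) such that both H1 and H2 are isomorphic to induced subgraphs of C. -/
open SimpleGraph

/-- A (finite simple) graph packaged with its vertex type. -/
abbrev GraphSig : Type 1 := (V : Type) × SimpleGraph V

/-- `G` contains an induced subgraph isomorphic to `H`. -/
def ContainsInduced {V W : Type*} (G : SimpleGraph V) (H : SimpleGraph W) : Prop :=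
  Nonempty (H ↪g G)

/-- `G` is `F`-free: no induced subgraph of `G` is isomorphic to a member of `F`. -/
def FamFree {V : Type*} (G : SimpleGraph V) (F : Set GraphSig) : Prop :=
  ∀ H ∈ F, ¬ ContainsInduced G H.2

/-- The super-pruned family `sp(F1, F2)`: graphs that belong to one of the two families
and have a member of the other family as an induced subgraph. -/
def spFamily (F1 F2 : Set GraphSig) : Set GraphSig :=
  {H | (H ∈ F1 ∧ ∃ H2 ∈ F2, ContainsInduced H.2 H2.2) ∨
       (H ∈ F2 ∧ ∃ H1 ∈ F1, ContainsInduced H.2 H1.2)}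

/-- The forbidden-pair family `Fp(F1, F2)`: pairs `(H1, H2) ∈ F1 × F2` such that
neither `H1` nor `H2` belongs to `sp(F1, F2)`. -/
def forbiddenPairs (F1 F2 : Set GraphSig) : Set (GraphSig × GraphSig) :=
  {p | p.1 ∈ F1 ∧ p.2 ∈ F2 ∧ p.1 ∉ spFamily F1 F2 ∧ p.2 ∉ spFamily F1 F2}

theorem lift_comp {V W : Type} (G : SimpleGraph V) (H : SimpleGraph W) (hH : H.Connected)
    (f : H ↪g G) : ∃ c : G.ConnectedComponent, ContainsInduced (G.induce c.supp) H := by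
  obtain ⟨w⟩ := hH.nonempty
  refine ⟨G.connectedComponentMk (f w), ⟨⟨⟨fun x => ⟨f x, ?_⟩, ?_⟩, ?_⟩⟩⟩
  · exact ConnectedComponent.sound ((hH.preconnected x w).map f.toHom)
  · intro a b h
    exact f.injective (congrArg Subtype.val h)
  · intro a b
    exact f.map_rel_iff

theorem ContainsInduced.tr {U V W : Type} {G : SimpleGraph U} {H : SimpleGraph V}
    {K : SimpleGraph W} (h : ContainsInduced G H) (k : ContainsInduced H K) :
    ContainsInduced G K :=
  h.elim fun f => k.elim fun g => ⟨f.comp g⟩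

theorem stmt4 {V : Type} [Fintype V] (G : SimpleGraph V) (F1 F2 : Set GraphSig)
    (hF1 : ∀ H ∈ F1, H.2.Connected) (hF2 : ∀ H ∈ F2, H.2.Connected) :
    (∀ c : G.ConnectedComponent,
        FamFree (G.induce c.supp) F1 ∨ FamFree (G.induce c.supp) F2) ↔
      (FamFree G (spFamily F1 F2) ∧
        ¬ ∃ (c : G.ConnectedComponent) (p : GraphSig × GraphSig),
            p ∈ forbiddenPairs F1 F2 ∧
            ContainsInduced (G.induce c.supp) p.1.2 ∧
            ContainsInduced (G.induce c.supp) p.2.2) := by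
  constructor
  · intro h
    refine ⟨?_, ?_⟩
    · rintro H hH ⟨f⟩
      rcases hH with ⟨h1, K, hK, hc⟩ | ⟨h2, K, hK, hc⟩
      · obtain ⟨c, hcc⟩ := lift_comp G H.2 (hF1 H h1) f
        rcases h c with h | h
        · exact h H h1 hcc
        · exact h K hK (hcc.tr hc)
      · obtain ⟨c, hcc⟩ := lift_comp G H.2 (hF2 H h2) f
        rcases h c with h | h
        · exact h K hK (hcc.tr hc)
        · exact h H h2 hcc
    · rintro ⟨c, p, hp, h1, h2⟩
      rcases h c with h | h
      · exact h _ hp.1 h1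
      · exact h _ hp.2.1 h2
  · rintro ⟨hs, hn⟩ c
    by_contra hcon
    rw [not_or] at hcon
    obtain ⟨ha, hb⟩ := hcon
    unfold FamFree at ha hb
    push Not at ha hb
    obtain ⟨H1, h1, c1⟩ := ha
    obtain ⟨H2, h2, c2⟩ := hb
    have hG : ContainsInduced G (G.induce c.supp) := ⟨Embedding.induce _⟩
    exact hn ⟨c, (H1, H2), ⟨h1, h2, fun hh => hs _ hh (hG.tr c1), fun hh => hs _ hh (hG.tr c2)⟩,
      c1, c2⟩
end

section
/- Let F1 and F2 be families of connected graphs such that the path P_α on α ≥ 1 vertices belongs to F1, and let G be a graph. Then every connected component of G is F1-free or F2-free if and only if there do not exist J1, J2 ⊆ V(G) with G[J1] isomorphic to a member of F1, G[J2] isomorphic to a member of F2, and d_G(J1,J2) ≤ α − 1. -/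
open SimpleGraph

/-- `d_G(P, Q)`: the minimum over `u ∈ P`, `v ∈ Q` of the shortest-path distance
from `u` to `v` in `G` (as an extended natural number, `⊤` if no path exists). -/
noncomputable def eSetDist {V : Type*} (G : SimpleGraph V) (P Q : Set V) : ℕ∞ :=
  ⨅ (u : V) (_ : u ∈ P) (v : V) (_ : v ∈ Q), G.edist u v

theorem geod_path {V : Type} (G : SimpleGraph V) {v u : V} (w : G.Walk v u)
    (hw : w.length = G.dist v u) (α : ℕ) (hα : α ≤ w.length + 1) :
    ∃ f : SimpleGraph.pathGraph α ↪g G, ∀ i, f i = w.getVert i.1 := by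
  have hd : ∀ i, i ≤ w.length → G.dist v (w.getVert i) = i := by
    intro i hi
    have h1 := SimpleGraph.dist_le (w.take i)
    have h2 := SimpleGraph.dist_le (w.drop i)
    have h3 := SimpleGraph.dist_le ((SimpleGraph.Reachable.exists_walk_length_eq_dist
      ⟨w.take i⟩).choose.append (w.drop i))
    rw [SimpleGraph.Walk.length_append, (SimpleGraph.Reachable.exists_walk_length_eq_dist
      ⟨w.take i⟩).choose_spec] at h3
    simp only [SimpleGraph.Walk.take_length, SimpleGraph.Walk.drop_length] at h1 h2 h3
    omega
  have hr : ∀ i, G.Reachable v (w.getVert i) := fun i => ⟨w.take i⟩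
  have hstep : ∀ a b, G.Reachable v a → G.Adj a b → G.dist v b ≤ G.dist v a + 1 := by
    intro a b ha hab
    obtain ⟨p, hp⟩ := ha.exists_walk_length_eq_dist
    have := SimpleGraph.dist_le (p.concat hab)
    rw [SimpleGraph.Walk.length_concat] at this
    omega
  refine ⟨⟨⟨fun i => w.getVert i.1, ?_⟩, ?_⟩, fun i => rfl⟩
  · intro i j hij
    have hi := hd i.1 (by omega)
    have hj := hd j.1 (by omega)
    simp only at hij
    rw [hij] at hi
    exact Fin.ext (by omega)
  · intro i j
    rw [SimpleGraph.pathGraph_adj]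
    change G.Adj (w.getVert i.1) (w.getVert j.1) ↔ _
    have hi := hd i.1 (by omega)
    have hj := hd j.1 (by omega)
    constructor
    · intro h
      have h1 := hstep _ _ (hr _) h
      have h2 := hstep _ _ (hr _) h.symm
      have h3 : i.1 ≠ j.1 := by
        intro h4
        rw [h4] at h
        exact G.irrefl h
      omega
    · rintro (h | h)
      · rw [← h]
        exact w.adj_getVert_succ (by omega)
      · rw [← h]
        exact (w.adj_getVert_succ (by omega)).symm

theorem contains_comp {V W : Type} (G : SimpleGraph V) (H : SimpleGraph W) (hH : H.Connected)
    (J : Set V) (e : H ≃g G.induce J) (u : V) (hu : u ∈ J) (c : G.ConnectedComponent)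
    (hc : u ∈ c.supp) : ContainsInduced (G.induce c.supp) H := by
  have hJ : J ⊆ c.supp := by
    intro x hx
    have h1 : (G.induce J).Connected := e.connected_iff.mp hH
    have h2 := (h1.preconnected ⟨x, hx⟩ ⟨u, hu⟩).map (SimpleGraph.Embedding.induce J).toHom
    have h3 : G.Reachable x u := h2
    rw [SimpleGraph.ConnectedComponent.mem_supp_iff] at hc ⊢
    rw [← hc]
    exact SimpleGraph.ConnectedComponent.sound h3
  exact ⟨e.toEmbedding.trans (SimpleGraph.induceHomOfLE G hJ)⟩

theorem emb_iso {V W : Type} (G : SimpleGraph V) (H : SimpleGraph W) (f : H ↪g G) :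
    Nonempty (H ≃g G.induce (Set.range f)) :=
  ⟨⟨Equiv.ofInjective f f.injective, by intro a b; simp⟩⟩

theorem eSetDist_le' {V : Type} (G : SimpleGraph V) (P Q : Set V) (u v : V) (hu : u ∈ P)
    (hv : v ∈ Q) : eSetDist G P Q ≤ G.edist u v :=
  iInf₂_le_of_le u hu (iInf₂_le v hv)

theorem stmt6 {V : Type} [Fintype V] (G : SimpleGraph V) (F1 F2 : Set GraphSig)
    (hF1 : ∀ H ∈ F1, H.2.Connected) (hF2 : ∀ H ∈ F2, H.2.Connected)
    (α : ℕ) (hα : 1 ≤ α)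
    (hpath : (⟨Fin α, SimpleGraph.pathGraph α⟩ : GraphSig) ∈ F1) :
    (∀ c : G.ConnectedComponent,
        FamFree (G.induce c.supp) F1 ∨ FamFree (G.induce c.supp) F2) ↔
      ¬ ∃ J1 J2 : Set V,
          (∃ H1 ∈ F1, Nonempty (H1.2 ≃g G.induce J1)) ∧
          (∃ H2 ∈ F2, Nonempty (H2.2 ≃g G.induce J2)) ∧
          eSetDist G J1 J2 ≤ ((α - 1 : ℕ) : ℕ∞) := by
  constructor
  · rintro h ⟨J1, J2, ⟨H1, hH1, ⟨e1⟩⟩, ⟨H2, hH2, ⟨e2⟩⟩, hd⟩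
    have hlt : eSetDist G J1 J2 < ⊤ := lt_of_le_of_lt hd (ENat.natCast_lt_top _)
    simp only [eSetDist, iInf_lt_iff] at hlt
    obtain ⟨u, hu, v, hv, huv⟩ := hlt
    have hr : G.Reachable u v := SimpleGraph.reachable_of_edist_ne_top huv.ne
    rcases h (G.connectedComponentMk u) with h | h
    · exact h H1 hH1 (contains_comp G H1.2 (hF1 _ hH1) J1 e1 u hu _ rfl)
    · exact h H2 hH2 (contains_comp G H2.2 (hF2 _ hH2) J2 e2 v hv _
        (SimpleGraph.ConnectedComponent.sound hr.symm))
  · intro h c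
    by_contra hcon
    simp only [FamFree, not_or, not_forall, not_not] at hcon
    obtain ⟨⟨H1, hH1, ⟨f1⟩⟩, ⟨H2, hH2, ⟨f2⟩⟩⟩ := hcon
    obtain ⟨x⟩ := (hF1 _ hH1).nonempty
    obtain ⟨y⟩ := (hF2 _ hH2).nonempty
    let g1 := f1.trans (SimpleGraph.Embedding.induce c.supp)
    let g2 := f2.trans (SimpleGraph.Embedding.induce c.supp)
    have hr : G.Reachable (g2 y) (g1 x) := by
      apply SimpleGraph.ConnectedComponent.exact
      exact (f2 y).2.trans (f1 x).2.symm
    obtain ⟨w, hw⟩ := hr.exists_walk_length_eq_dist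
    by_cases hl : w.length ≤ α - 1
    · refine h ⟨Set.range g1, Set.range g2, ⟨H1, hH1, emb_iso _ _ g1⟩,
        ⟨H2, hH2, emb_iso _ _ g2⟩, ?_⟩
      refine (eSetDist_le' G (Set.range g1) (Set.range g2) (g1 x) (g2 y) ⟨x, rfl⟩ ⟨y, rfl⟩).trans ?_
      rw [SimpleGraph.edist_comm]
      exact (SimpleGraph.edist_le w).trans (by exact_mod_cast hl)
    · obtain ⟨f, hf⟩ := geod_path G w hw α (by omega)
      refine h ⟨Set.range f, Set.range g2, ⟨_, hpath, emb_iso _ _ f⟩,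
        ⟨H2, hH2, emb_iso _ _ g2⟩, ?_⟩
      refine (eSetDist_le' G (Set.range f) (Set.range g2) (g2 y) (g2 y) ⟨⟨0, hα⟩, ?_⟩ ⟨y, rfl⟩).trans ?_
      · rw [hf]; simp
      · simp
end

section
/- Let G be a graph, J* ⊆ V(G) with G[J*] isomorphic to the claw K_{1,3}, and T* ⊆ V(G) with G[T*] isomorphic to the triangle K_3, such that d := d_G(J*,T*) is finite and (J*,T*) is a closest claw–triangle pair: for all J, T ⊆ V(G) with G[J] ≅ K_{1,3}, G[T] ≅ K_3 and d_G(J,T) finite, one has d ≤ d_G(J,T). Assume d ≥ 2 and let P* = x_0 x_1 ⋯ x_d be a shortest path in G with x_0 = u ∈ J* and x_d = v ∈ T*. Let C be the connected component of G − (J* ∪ T*) containing x_1. Then V(C) = {x_1, …, x_{d−1}}, the graph C is exactly the path x_1 ⋯ x_{d−1}, and the only edges of G between V(C) and J* ∪ T* are {u, x_1} and {x_{d−1}, v}. -/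
open SimpleGraph

/-- The claw `K_{1,3}`: center `0` joined to the leaves `1`, `2`, `3`. -/
def clawGraph : SimpleGraph (Fin 4) :=
  SimpleGraph.fromEdgeSet {s(0, 1), s(0, 2), s(0, 3)}

/-- The triangle `K_3`. -/
def triangleGraph : SimpleGraph (Fin 3) := ⊤

theorem claw_of {V : Type} (G : SimpleGraph V) (a b c e : V) (hab : G.Adj a b) (hac : G.Adj a c)
    (hae : G.Adj a e) (hbc : b ≠ c) (hbe : b ≠ e) (hce : c ≠ e) (nbc : ¬ G.Adj b c)
    (nbe : ¬ G.Adj b e) (nce : ¬ G.Adj c e) :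
    ∃ J : Set V, Nonempty (clawGraph ≃g G.induce J) ∧ a ∈ J ∧ b ∈ J ∧ c ∈ J ∧ e ∈ J := by
  have hinj : Function.Injective ![a, b, c, e] := by
    have h1 := hab.ne
    have h2 := hac.ne
    have h3 := hae.ne
    intro i j
    fin_cases i <;> fin_cases j <;> simp [h1, h2, h3, hbc, hbe, hce, h1.symm, h2.symm, h3.symm,
      hbc.symm, hbe.symm, hce.symm]
  refine ⟨Set.range ![a, b, c, e], ⟨⟨Equiv.ofInjective _ hinj, ?_⟩⟩, ⟨0, rfl⟩, ⟨1, rfl⟩, ⟨2, rfl⟩,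
    ⟨3, rfl⟩⟩
  intro i j
  fin_cases i <;> fin_cases j <;> simp [clawGraph, hab, hac, hae, nbc, nbe, nce, hab.symm,
    hac.symm, hae.symm, G.adj_comm c b, G.adj_comm e b, G.adj_comm e c]

theorem tri_of {V : Type} (G : SimpleGraph V) (a b c : V) (hab : G.Adj a b) (hac : G.Adj a c)
    (hbc : G.Adj b c) :
    ∃ J : Set V, Nonempty (triangleGraph ≃g G.induce J) ∧ a ∈ J ∧ b ∈ J ∧ c ∈ J := by
  have hinj : Function.Injective ![a, b, c] := by
    have h1 := hab.ne
    have h2 := hac.ne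
    have h3 := hbc.ne
    intro i j
    fin_cases i <;> fin_cases j <;> simp [h1, h2, h3, h1.symm, h2.symm, h3.symm]
  refine ⟨Set.range ![a, b, c], ⟨⟨Equiv.ofInjective _ hinj, ?_⟩⟩, ⟨0, rfl⟩, ⟨1, rfl⟩, ⟨2, rfl⟩⟩
  intro i j
  fin_cases i <;> fin_cases j <;> simp [triangleGraph, hab, hac, hbc, hab.symm,
    hac.symm, hbc.symm]

theorem eSetDist_le_of {V : Type} (G : SimpleGraph V) (P Q : Set V) (a b : V) (ha : a ∈ P)
    (hb : b ∈ Q) : eSetDist G P Q ≤ G.edist a b :=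
  iInf_le_of_le a (iInf_le_of_le ha (iInf_le_of_le b (iInf_le_of_le hb le_rfl)))

theorem edist_getVert {V : Type} (G : SimpleGraph V) (u v : V) (p : G.Walk u v) (i k : ℕ)
    (h : i + k ≤ p.length) : G.edist (p.getVert i) (p.getVert (i + k)) ≤ k := by
  induction k with
  | zero => simp
  | succ k ih =>
    have h1 := ih (by omega)
    have h2 : G.Adj (p.getVert (i + k)) (p.getVert (i + k + 1)) :=
      p.adj_getVert_succ (by omega)
    calc _ ≤ G.edist (p.getVert i) (p.getVert (i + k)) +
          G.edist (p.getVert (i + k)) (p.getVert (i + k + 1)) := G.edist_triangle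
      _ ≤ k + 1 := add_le_add h1 (by rw [SimpleGraph.edist_eq_one_iff_adj.2 h2])
      _ = _ := by push_cast; rfl

theorem stmt7 {V : Type} [Fintype V] (G : SimpleGraph V) (Js Ts : Set V)
    (hJ : Nonempty (clawGraph ≃g G.induce Js))
    (hT : Nonempty (triangleGraph ≃g G.induce Ts))
    (d : ℕ) (hd : eSetDist G Js Ts = (d : ℕ∞)) (hd2 : 2 ≤ d)
    (hclosest : ∀ J T : Set V, Nonempty (clawGraph ≃g G.induce J) →
      Nonempty (triangleGraph ≃g G.induce T) → eSetDist G J T < ⊤ →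
      (d : ℕ∞) ≤ eSetDist G J T)
    (u v : V) (hu : u ∈ Js) (hv : v ∈ Ts)
    (p : G.Walk u v) (hp : p.IsPath) (hlen : p.length = d)
    (hx1 : p.getVert 1 ∈ (Js ∪ Ts)ᶜ) :
    (Subtype.val ''
        ((G.induce (Js ∪ Ts)ᶜ).connectedComponentMk ⟨p.getVert 1, hx1⟩).supp
      = {w : V | ∃ i, 1 ≤ i ∧ i ≤ d - 1 ∧ w = p.getVert i}) ∧
    (∀ i j, 1 ≤ i → i ≤ d - 1 → 1 ≤ j → j ≤ d - 1 →
        (G.Adj (p.getVert i) (p.getVert j) ↔ (j = i + 1 ∨ i = j + 1))) ∧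
    (∀ w ∈ Subtype.val ''
        ((G.induce (Js ∪ Ts)ᶜ).connectedComponentMk ⟨p.getVert 1, hx1⟩).supp,
      ∀ y ∈ Js ∪ Ts,
        (G.Adj w y ↔ ((w = p.getVert 1 ∧ y = u) ∨ (w = p.getVert (d - 1) ∧ y = v)))) := by
  have key : ∀ J T : Set V, Nonempty (clawGraph ≃g G.induce J) →
      Nonempty (triangleGraph ≃g G.induce T) → ∀ i k, i + k ≤ d → k < d →
      p.getVert i ∈ J → p.getVert (i + k) ∈ T → False := by
    intro J T hJ' hT' i k hik hk h1 h2
    have h3 := (eSetDist_le_of G J T _ _ h1 h2).trans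
      (edist_getVert G u v p i k (by omega))
    have h4 := (hclosest J T hJ' hT' (lt_of_le_of_lt h3 (ENat.natCast_lt_top k))).trans h3
    have h5 : d ≤ k := by exact_mod_cast h4
    omega
  have h0 : p.getVert 0 = u := p.getVert_zero
  have hdv : p.getVert d = v := by rw [← hlen]; exact p.getVert_length
  have hsucc : ∀ i, i < d → G.Adj (p.getVert i) (p.getVert (i + 1)) := fun i hi =>
    p.adj_getVert_succ (by omega)
  have hinj : ∀ i j, i ≤ d → j ≤ d → p.getVert i = p.getVert j → i = j := by
    intro i j hi hj h
    exact hp.getVert_injOn (by simp; omega) (by simp; omega) h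
  have notri : ∀ i w, i + 1 ≤ d → w = p.getVert i → ∀ a b : V,
      G.Adj w a → G.Adj w b → G.Adj a b → False := by
    intro i w hi hw a b ha hb hab
    obtain ⟨T, hT', hwT, -, -⟩ := tri_of G w a b ha hb hab
    exact key Js T hJ hT' 0 i (by omega) (by omega) (by rw [h0]; exact hu) (by rw [zero_add, ← hw]; exact hwT)
  have nbr : ∀ i, i + 2 ≤ d → ∀ w, G.Adj (p.getVert (i + 1)) w →
      w = p.getVert i ∨ w = p.getVert (i + 2) := by
    intro i hi w hw
    by_contra! hne
    have a1 := hsucc i (by omega)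
    have a2 := hsucc (i + 1) (by omega)
    have n1 : ¬ G.Adj (p.getVert i) (p.getVert (i + 2)) := fun h =>
      notri i _ (by omega) rfl _ _ a1 h a2
    have n2 : ¬ G.Adj (p.getVert i) w := fun h =>
      notri i _ (by omega) rfl _ _ a1 h hw
    have n3 : ¬ G.Adj (p.getVert (i + 2)) w := fun h =>
      notri (i + 1) _ (by omega) rfl _ _ a2 hw h
    have hne3 : p.getVert i ≠ p.getVert (i + 2) := fun h => by
      have := hinj _ _ (by omega) (by omega) h
      omega
    obtain ⟨J, hJ', -, -, hm, -⟩ := claw_of G _ _ _ _ a1.symm a2 hw hne3 hne.1.symm hne.2.symm n1 n2 n3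
    exact key J Ts hJ' hT (i + 2) (d - (i + 2)) (by omega) (by omega) hm
      (by rw [Nat.add_sub_cancel' hi, hdv]; exact hv)
  have hout : ∀ i, 1 ≤ i → i ≤ d - 1 → p.getVert i ∈ (Js ∪ Ts)ᶜ := by
    rintro i h1 h2 (h | h)
    · exact key Js Ts hJ hT i (d - i) (by omega) (by omega) h
        (by rw [Nat.add_sub_cancel' (by omega), hdv]; exact hv)
    · exact key Js Ts hJ hT 0 i (by omega) (by omega) (by rw [h0]; exact hu) (by rwa [zero_add])
  have main : (Subtype.val ''
        ((G.induce (Js ∪ Ts)ᶜ).connectedComponentMk ⟨p.getVert 1, hx1⟩).supp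
      = {w : V | ∃ i, 1 ≤ i ∧ i ≤ d - 1 ∧ w = p.getVert i}) := by
    ext w
    constructor
    · rintro ⟨z, hz, rfl⟩
      rw [SimpleGraph.ConnectedComponent.mem_supp_iff, SimpleGraph.ConnectedComponent.eq] at hz
      obtain ⟨q⟩ := hz.symm
      have gen : ∀ (a b : ((Js ∪ Ts)ᶜ : Set V)) (q : (G.induce (Js ∪ Ts)ᶜ).Walk a b),
          (∃ i, 1 ≤ i ∧ i ≤ d - 1 ∧ a.1 = p.getVert i) →
          (∃ i, 1 ≤ i ∧ i ≤ d - 1 ∧ b.1 = p.getVert i) := by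
        intro a b q
        induction q with
        | nil => exact id
        | @cons a c b hac q ih =>
          rintro ⟨i, hi1, hi2, hi⟩
          apply ih
          have hac' : G.Adj a.1 c.1 := hac
          obtain ⟨j, rfl⟩ : ∃ j, i = j + 1 := ⟨i - 1, by omega⟩
          rw [hi] at hac'
          rcases nbr j (by omega) _ hac' with h | h
          · refine ⟨j, ?_, by omega, h⟩
            by_contra hj
            obtain rfl : j = 0 := by omega
            exact c.2 (Or.inl (by rw [h, h0]; exact hu))
          · refine ⟨j + 2, by omega, ?_, h⟩
            by_contra hj
            have : j + 2 = d := by omega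
            exact c.2 (Or.inr (by rw [h, this, hdv]; exact hv))
      exact gen _ _ q ⟨1, le_rfl, by omega, rfl⟩
    · rintro ⟨i, h1, h2, rfl⟩
      refine ⟨⟨_, hout i h1 h2⟩, ?_, rfl⟩
      rw [SimpleGraph.ConnectedComponent.mem_supp_iff, SimpleGraph.ConnectedComponent.eq]
      induction i, h1 using Nat.le_induction with
      | base => exact SimpleGraph.Reachable.refl _
      | succ i hi ih =>
        refine SimpleGraph.Reachable.trans (SimpleGraph.Adj.reachable ?_) (ih (by omega))
        exact (hsucc i (by omega)).symm
  refine ⟨main, ?_, ?_⟩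
  · intro i j hi1 hi2 hj1 hj2
    constructor
    · intro h
      obtain ⟨i, rfl⟩ : ∃ j, i = j + 1 := ⟨i - 1, by omega⟩
      rcases nbr i (by omega) _ h with h | h
      · have := hinj _ _ (by omega) (by omega) h
        omega
      · have := hinj _ _ (by omega) (by omega) h
        omega
    · rintro (rfl | rfl)
      · exact hsucc i (by omega)
      · exact (hsucc j (by omega)).symm
  · intro w hw y hy
    rw [main] at hw
    obtain ⟨i, hi1, hi2, rfl⟩ := hw
    constructor
    · intro h
      obtain ⟨i, rfl⟩ : ∃ j, i = j + 1 := ⟨i - 1, by omega⟩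
      rcases nbr i (by omega) _ h with h | h
      · left
        by_cases hi : i = 0
        · subst hi
          exact ⟨rfl, h.trans h0⟩
        · exact absurd hy (h ▸ hout i (by omega) (by omega))
      · right
        by_cases hi : i + 2 = d
        · refine ⟨by rw [← hi]; rfl, by rw [h, hi, hdv]⟩
        · exact absurd hy (h ▸ hout (i + 2) (by omega) (by omega))
    · rintro (⟨h, rfl⟩ | ⟨h, rfl⟩)
      · rw [h]
        have := hsucc 0 (by omega)
        rw [h0] at this
        exact this.symm
      · rw [h]
        have := hsucc (d - 1) (by omega)
        rwa [Nat.sub_add_cancel (by omega), hdv] at this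
end

section
/- Let G be a graph containing vertex sets J, T ⊆ V(G) with G[J] isomorphic to the claw K_{1,3}, G[T] isomorphic to the triangle K_3, and d_G(J,T) finite, and let (J*,T*) be a closest such pair (minimizing d_G(J,T) over all such pairs at finite distance). Call a set S ⊆ V(G) feasible if every connected component of G − S is K_{1,3}-free or K_3-free. Then there exists a feasible set S of minimum cardinality among all feasible sets satisfying S ∩ (J* ∪ T*) ≠ ∅. -/
open SimpleGraph

/-- `S` is feasible for `G`: every connected component of `G − S` is
claw-free or triangle-free. -/
def Feasible {V : Type} (G : SimpleGraph V) (S : Set V) : Prop :=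
  ∀ c : (G.induce Sᶜ).ConnectedComponent,
    ¬ ContainsInduced ((G.induce Sᶜ).induce c.supp) clawGraph ∨
    ¬ ContainsInduced ((G.induce Sᶜ).induce c.supp) triangleGraph

def RS {V : Type} (G : SimpleGraph V) (S : Set V) : V → V → Prop :=
  Relation.ReflTransGen (fun x y => G.Adj x y ∧ x ∉ S ∧ y ∉ S)

lemma RS_symm {V : Type} {G : SimpleGraph V} {S : Set V} {x y : V} (h : RS G S x y) :
    RS G S y x := by
  induction h with
  | refl => exact Relation.ReflTransGen.refl
  | tail _ h2 ih => exact Relation.ReflTransGen.head ⟨h2.1.symm, h2.2.2, h2.2.1⟩ ih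

lemma claw_adj (i : Fin 4) (hi : i ≠ 0) : clawGraph.Adj 0 i := by
  fin_cases i <;> simp_all [clawGraph]

lemma RS_of_reach {V : Type} {G : SimpleGraph V} {S : Set V} {x y : (Sᶜ : Set V)}
    (h : (G.induce Sᶜ).Reachable x y) : RS G S x y := by
  obtain ⟨w⟩ := h
  induction w with
  | nil => exact Relation.ReflTransGen.refl
  | @cons a b c h _ ih => exact Relation.ReflTransGen.head ⟨h, a.2, b.2⟩ ih

lemma reach_of_RS {V : Type} {G : SimpleGraph V} {S : Set V} {x y : V}
    (h : RS G S x y) (hx : x ∉ S) :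
    ∃ hy : y ∉ S, (G.induce Sᶜ).Reachable ⟨x, hx⟩ ⟨y, hy⟩ := by
  induction h with
  | refl => exact ⟨hx, Reachable.refl _⟩
  | tail _ h2 ih =>
    obtain ⟨hy, h3⟩ := ih
    refine ⟨h2.2.2, h3.trans (Adj.reachable ?_)⟩
    exact h2.1

lemma emb_comp {V W : Type} {G : SimpleGraph V} {H : SimpleGraph W} {S : Set V}
    (c : (G.induce Sᶜ).ConnectedComponent) (f : H ↪g G)
    (hS : ∀ i, f i ∉ S) (hc : ∀ i, (G.induce Sᶜ).connectedComponentMk ⟨f i, hS i⟩ = c) :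
    ContainsInduced ((G.induce Sᶜ).induce c.supp) H := by
  refine ⟨⟨⟨fun i => ⟨⟨f i, hS i⟩, hc i⟩, ?_⟩, ?_⟩⟩
  · intro a b h
    exact f.injective (congrArg (fun q => q.1.1) h)
  · intro a b
    exact f.map_rel_iff

lemma feas_iff {V : Type} (G : SimpleGraph V) (S : Set V) :
    Feasible G S ↔ ∀ (f : clawGraph ↪g G) (g : triangleGraph ↪g G),
      (∀ i, f i ∉ S) → (∀ i, g i ∉ S) → ¬ RS G S (f 0) (g 0) := by
  constructor
  · intro h f g hf hg hr
    obtain ⟨_, hr⟩ := reach_of_RS hr (hf 0)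
    rcases h ((G.induce Sᶜ).connectedComponentMk ⟨f 0, hf 0⟩) with h | h
    · apply h
      refine emb_comp _ f hf fun i => ?_
      by_cases hi : i = 0
      · subst hi; rfl
      · apply ConnectedComponent.sound
        apply Adj.reachable
        exact (f.map_rel_iff.2 (claw_adj i hi)).symm
    · apply h
      refine emb_comp _ g hg fun i => ?_
      apply ConnectedComponent.sound
      refine Reachable.trans ?_ hr.symm
      by_cases hi : i = 0
      · subst hi; exact Reachable.refl _
      · apply Adj.reachable
        exact g.map_rel_iff.2 (show triangleGraph.Adj i 0 from hi)
  · intro h c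
    by_contra hc
    push Not at hc
    obtain ⟨⟨f⟩, ⟨g⟩⟩ := hc
    let e1 : (G.induce Sᶜ).induce c.supp ↪g G.induce Sᶜ := Embedding.induce _
    let e2 : G.induce Sᶜ ↪g G := Embedding.induce _
    refine h ((f.trans e1).trans e2) ((g.trans e1).trans e2)
      (fun i => (f i).1.2) (fun i => (g i).1.2) ?_
    refine RS_of_reach (x := (f 0).1) (y := (g 0).1) ?_
    exact ConnectedComponent.exact ((f 0).2.trans (g 0).2.symm)

lemma range_iso {V W : Type} {G : SimpleGraph V} {H : SimpleGraph W} (f : H ↪g G) :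
    Nonempty (H ≃g G.induce (Set.range f)) :=
  ⟨⟨Equiv.ofInjective f f.injective, by intro a b; exact f.map_rel_iff⟩⟩

lemma mk_tri {V : Type} {G : SimpleGraph V} {a b c : V} (h1 : G.Adj a b) (h2 : G.Adj a c)
    (h3 : G.Adj b c) : ∃ g : triangleGraph ↪g G, g 0 = a := by
  have := h1.ne; have := h2.ne; have := h3.ne
  refine ⟨⟨⟨![a, b, c], ?_⟩, ?_⟩, rfl⟩
  · intro i j h
    fin_cases i <;> fin_cases j <;> simp_all
  · intro i j
    have := h1.symm; have := h2.symm; have := h3.symm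
    change G.Adj (![a, b, c] i) (![a, b, c] j) ↔ _
    fin_cases i <;> fin_cases j <;> simp_all [triangleGraph]

lemma mk_claw {V : Type} {G : SimpleGraph V} {a b c d : V} (h1 : G.Adj a b) (h2 : G.Adj a c)
    (h3 : G.Adj a d) (n1 : b ≠ c) (n2 : b ≠ d) (n3 : c ≠ d) (m1 : ¬ G.Adj b c)
    (m2 : ¬ G.Adj b d) (m3 : ¬ G.Adj c d) : ∃ g : clawGraph ↪g G, g 0 = a := by
  have := h1.ne; have := h2.ne; have := h3.ne
  have := h1.symm; have := h2.symm; have := h3.symm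
  have k1 : ¬ G.Adj c b := fun h => m1 h.symm
  have k2 : ¬ G.Adj d b := fun h => m2 h.symm
  have k3 : ¬ G.Adj d c := fun h => m3 h.symm
  refine ⟨⟨⟨![a, b, c, d], ?_⟩, ?_⟩, rfl⟩
  · intro i j h
    fin_cases i <;> fin_cases j <;> simp_all
  · intro i j
    change G.Adj (![a, b, c, d] i) (![a, b, c, d] j) ↔ _
    fin_cases i <;> fin_cases j <;> simp_all [clawGraph]

theorem stmt8 {V : Type} [Fintype V] (G : SimpleGraph V) (Js Ts : Set V)
    (hJ : Nonempty (clawGraph ≃g G.induce Js))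
    (hT : Nonempty (triangleGraph ≃g G.induce Ts))
    (hfin : eSetDist G Js Ts < ⊤)
    (hclosest : ∀ J T : Set V, Nonempty (clawGraph ≃g G.induce J) →
      Nonempty (triangleGraph ≃g G.induce T) → eSetDist G J T < ⊤ →
      eSetDist G Js Ts ≤ eSetDist G J T) :
    ∃ S : Set V, Feasible G S ∧ (S ∩ (Js ∪ Ts)).Nonempty ∧
      ∀ S' : Set V, Feasible G S' → S.ncard ≤ S'.ncard := by
  classical
  have hle : ∀ (P Q : Set V) (x y : V), x ∈ P → y ∈ Q → eSetDist G P Q ≤ G.edist x y := by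
    intro P Q x y hx hy
    exact (iInf₂_le x hx).trans (iInf₂_le y hy)
  obtain ⟨S, hS, hmin⟩ : ∃ S : Set V, Feasible G S ∧
      ∀ S' : Set V, Feasible G S' → S.ncard ≤ S'.ncard := by
    have huniv : Feasible G Set.univ := by
      rw [feas_iff]
      intro f g hf
      exact absurd (Set.mem_univ _) (hf 0)
    obtain ⟨S, h1, h2⟩ := Set.exists_min_image {S : Set V | Feasible G S} Set.ncard
      (Set.toFinite _) ⟨_, huniv⟩
    exact ⟨S, h1, h2⟩
  by_cases hmeet : (S ∩ (Js ∪ Ts)).Nonempty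
  · exact ⟨S, hS, hmeet, hmin⟩
  have hnot : ∀ x, x ∈ Js ∪ Ts → x ∉ S := fun x hx hxS => hmeet ⟨x, hxS, hx⟩
  obtain ⟨iJ⟩ := hJ
  obtain ⟨iT⟩ := hT
  obtain ⟨⟨u, v⟩, ⟨hu, hv⟩, huv⟩ := Set.exists_min_image (Js ×ˢ Ts) (fun q => G.edist q.1 q.2)
    (Set.toFinite _) ⟨((iJ 0).1, (iT 0).1), (iJ 0).2, (iT 0).2⟩
  simp only at hu hv huv
  have heq : eSetDist G Js Ts = G.edist u v := by
    apply le_antisymm (hle _ _ _ _ hu hv)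
    exact le_iInf₂ fun x hx => le_iInf₂ fun y hy => huv (x, y) ⟨hx, hy⟩
  have hne : G.edist u v ≠ ⊤ := by rw [← heq]; exact hfin.ne
  obtain ⟨w, hw⟩ := exists_walk_of_edist_ne_top hne
  have H1 : ∀ (f : clawGraph ↪g G) i, G.edist u v ≤ G.edist (f i) v := by
    intro f i
    have h := hle (Set.range f) Ts (f i) v ⟨i, rfl⟩ hv
    by_cases ht : eSetDist G (Set.range f) Ts < ⊤
    · rw [← heq]; exact (hclosest _ _ (range_iso f) ⟨iT⟩ ht).trans h
    · rw [not_lt, top_le_iff] at ht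
      rw [ht, top_le_iff] at h
      rw [h]; exact le_top
  have H2 : ∀ (g : triangleGraph ↪g G) i, G.edist u v ≤ G.edist u (g i) := by
    intro g i
    have h := hle Js (Set.range g) u (g i) hu ⟨i, rfl⟩
    by_cases ht : eSetDist G Js (Set.range g) < ⊤
    · rw [← heq]; exact (hclosest _ _ ⟨iJ⟩ (range_iso g) ht).trans h
    · rw [not_lt, top_le_iff] at ht
      rw [ht, top_le_iff] at h
      rw [h]; exact le_top
  rw [← hw] at H1 H2
  have E1 : ∀ k, k ≤ w.length → G.edist u (w.getVert k) ≤ (k : ℕ) := by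
    intro k hk
    refine (Walk.edist_le (w.take k)).trans ?_
    rw [Walk.take_length]
    exact_mod_cast min_le_left _ _
  have E2 : ∀ k, k ≤ w.length → G.edist (w.getVert k) v ≤ ((w.length - k : ℕ) : ℕ∞) := by
    intro k hk
    refine (Walk.edist_le (w.drop k)).trans ?_
    rw [Walk.drop_length]
  have C1 : ∀ (f : clawGraph ↪g G) i k, 0 < k → k < w.length → f i ≠ w.getVert k := by
    intro f i k h0 hk he
    have h := H1 f i
    rw [he] at h
    have h := h.trans (E2 k hk.le)
    have : w.length ≤ w.length - k := by exact_mod_cast h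
    omega
  have C2 : ∀ (g : triangleGraph ↪g G) i k, 0 < k → k < w.length → g i ≠ w.getVert k := by
    intro g i k h0 hk he
    have h := H2 g i
    rw [he] at h
    have h := h.trans (E1 k hk.le)
    have : w.length ≤ k := by exact_mod_cast h
    omega
  have N : ∀ k y, 0 < k → k < w.length → G.Adj (w.getVert k) y →
      y = w.getVert (k - 1) ∨ y = w.getVert (k + 1) := by
    intro k y h0 hk hy
    by_contra hcon
    push Not at hcon
    obtain ⟨n1, n2⟩ := hcon
    have a2 : G.Adj (w.getVert k) (w.getVert (k + 1)) := w.adj_getVert_succ hk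
    have a1 : G.Adj (w.getVert k) (w.getVert (k - 1)) := by
      have := w.adj_getVert_succ (i := k - 1) (by omega)
      rw [Nat.sub_add_cancel h0] at this
      exact this.symm
    have n3 : w.getVert (k - 1) ≠ w.getVert (k + 1) := by
      intro he
      have h1 := E1 (k - 1) (by omega)
      have h2 := E2 (k + 1) (by omega)
      rw [← he] at h2
      have h3 : G.edist u v ≤ _ := SimpleGraph.edist_triangle (G := G) (v := w.getVert (k - 1))
      have h4 := h3.trans (add_le_add h1 h2)
      rw [← hw] at h4
      have : w.length ≤ (k - 1) + (w.length - (k + 1)) := by exact_mod_cast h4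
      omega
    have T : ∀ b c, G.Adj (w.getVert k) b → G.Adj (w.getVert k) c → ¬ G.Adj b c := by
      intro b c hb hc hbc
      obtain ⟨g, hg⟩ := mk_tri hb hc hbc
      exact C2 g 0 k h0 hk hg
    obtain ⟨f, hf⟩ := mk_claw hy a1 a2 n1 n2 n3 (T _ _ hy a1) (T _ _ hy a2) (T _ _ a1 a2)
    exact C1 f 0 k h0 hk hf
  set I : Set V := {x | ∃ k, 0 < k ∧ k < w.length ∧ x = w.getVert k} with hI
  have huS : u ∉ S := hnot u (Or.inl hu)
  have hvS : v ∉ S := hnot v (Or.inr hv)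
  have hSI : ∃ x ∈ S, x ∈ I := by
    by_contra hcon
    push Not at hcon
    have hp : ∀ k, k ≤ w.length → w.getVert k ∉ S := by
      intro k hk hkS
      rcases Nat.eq_zero_or_pos k with h | h
      · subst h; rw [Walk.getVert_zero] at hkS; exact huS hkS
      rcases hk.eq_or_lt with h' | h'
      · rw [h', Walk.getVert_length] at hkS; exact hvS hkS
      · exact hcon _ hkS ⟨k, h, h', rfl⟩
    have hr : ∀ k, k ≤ w.length → RS G S u (w.getVert k) := by
      intro k
      induction k with
      | zero => intro _; rw [Walk.getVert_zero]; exact Relation.ReflTransGen.refl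
      | succ k ih =>
        intro hk
        exact Relation.ReflTransGen.tail (ih (by omega))
          ⟨w.adj_getVert_succ (by omega), hp _ (by omega), hp _ hk⟩
    have hr' := hr _ le_rfl
    rw [Walk.getVert_length] at hr'
    let f : clawGraph ↪g G := iJ.toEmbedding.trans (Embedding.induce _)
    let g : triangleGraph ↪g G := iT.toEmbedding.trans (Embedding.induce _)
    have hfS : ∀ i, f i ∉ S := fun i => hnot _ (Or.inl (iJ i).2)
    have hgS : ∀ i, g i ∉ S := fun i => hnot _ (Or.inr (iT i).2)
    refine (feas_iff G S).1 hS f g hfS hgS ?_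
    have hfu : RS G S (f 0) u := by
      obtain ⟨i, hi⟩ := iJ.surjective ⟨u, hu⟩
      have hi' : f i = u := congrArg Subtype.val hi
      rw [← hi']
      by_cases h : i = 0
      · subst h; exact Relation.ReflTransGen.refl
      · exact Relation.ReflTransGen.single ⟨f.map_rel_iff.2 (claw_adj i h), hfS _, hfS _⟩
    have hgv : RS G S v (g 0) := by
      obtain ⟨i, hi⟩ := iT.surjective ⟨v, hv⟩
      have hi' : g i = v := congrArg Subtype.val hi
      rw [← hi']
      by_cases h : i = 0
      · subst h; exact Relation.ReflTransGen.refl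
      · exact Relation.ReflTransGen.single
          ⟨g.map_rel_iff.2 (show triangleGraph.Adj i 0 from h), hgS _, hgS _⟩
    exact (hfu.trans hr').trans hgv
  obtain ⟨x0, hx0S, hx0I⟩ := hSI
  refine ⟨insert u (S \ I), ?_, ⟨u, Set.mem_insert _ _, Or.inl hu⟩, ?_⟩
  · rw [feas_iff]
    intro f g hf hg hr
    have hfI : ∀ i, f i ∉ I := by
      rintro i ⟨k, h0, hk, he⟩; exact C1 f i k h0 hk he
    have hgI : ∀ i, g i ∉ I := by
      rintro i ⟨k, h0, hk, he⟩; exact C2 g i k h0 hk he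
    have hdiff : ∀ x, x ∉ insert u (S \ I) → x ∉ I → x ∉ S := by
      intro x hx hxI hxS
      exact hx (Or.inr ⟨hxS, hxI⟩)
    refine (feas_iff G S).1 hS f g (fun i => hdiff _ (hf i) (hfI i))
      (fun i => hdiff _ (hg i) (hgI i)) ?_
    let r : V → V := fun x => if x ∈ I then v else x
    have key : ∀ x y, x ∈ I → G.Adj x y → y ∉ insert u (S \ I) → y ∉ I → y = v := by
      rintro x y ⟨k, h0, hk, rfl⟩ ha hy hyI
      rcases N k y h0 hk ha with h | h
      · by_cases h1 : k - 1 = 0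
        · rw [h1, Walk.getVert_zero] at h
          exact absurd (Or.inl h) hy
        · exact absurd ⟨k - 1, by omega, by omega, h⟩ hyI
      · by_cases h1 : k + 1 = w.length
        · rw [h1, Walk.getVert_length] at h
          exact h
        · exact absurd ⟨k + 1, by omega, by omega, h⟩ hyI
    have hrr : ∀ y, RS G (insert u (S \ I)) (f 0) y → RS G S (f 0) (r y) := by
      intro y hy
      induction hy with
      | refl => simp only [r, if_neg (hfI 0)]; exact Relation.ReflTransGen.refl
      | @tail b c _ h2 ih =>
        obtain ⟨ha, hb, hc⟩ := h2
        by_cases hbI : b ∈ I <;> by_cases hcI : c ∈ I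
        · simpa only [r, if_pos hbI, if_pos hcI] using ih
        · have := key b c hbI ha hc hcI
          simp only [r, if_pos hbI] at ih
          simp only [r, if_neg hcI]
          rw [this]; exact ih
        · have := key c b hcI ha.symm hb hbI
          simp only [r, if_neg hbI] at ih
          simp only [r, if_pos hcI]
          rw [← this]; exact ih
        · simp only [r, if_neg hbI] at ih
          simp only [r, if_neg hcI]
          exact Relation.ReflTransGen.tail ih ⟨ha, hdiff _ hb hbI, hdiff _ hc hcI⟩
    have := hrr _ hr
    simpa only [r, if_neg (hgI 0)] using this
  · intro S' hS'
    refine le_trans ?_ (hmin S' hS')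
    have h1 : (insert u (S \ I)).ncard ≤ (S \ I).ncard + 1 := Set.ncard_insert_le _ _
    have h2 : (S \ I).ncard < S.ncard := by
      apply Set.ncard_lt_ncard _ (Set.toFinite _)
      exact ⟨Set.sdiff_subset, fun h => (h hx0S).2 hx0I⟩
    omega
end

section
/- Let F1 and F2 be families of connected graphs, let i ∈ {1,2}, let G be a graph, and let C be a connected component of G containing no induced subgraph isomorphic to any member of F_i \ sp(F1,F2). Let m be the minimum cardinality of a set X ⊆ V(C) such that C − X is F_i-free. Then for every integer k ≥ 0 the following are equivalent: (1) there exists S ⊆ V(G) with |S| ≤ k such that every connected component of G − S is F1-free or F2-free; (2) m ≤ k and there exists S' ⊆ V(G) \ V(C) with |S'| ≤ k − m such that every connected component of (G − V(C)) − S' is F1-free or F2-free. -/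
open SimpleGraph

/-- Every connected component of `G` is `F1`-free or `F2`-free. -/
def ComponentsOK {V : Type*} (G : SimpleGraph V) (F1 F2 : Set GraphSig) : Prop :=
  ∀ c : G.ConnectedComponent, FamFree (G.induce c.supp) F1 ∨ FamFree (G.induce c.supp) F2

lemma FamFree.of_emb {V W : Type*} {G : SimpleGraph V} {G' : SimpleGraph W} {F : Set GraphSig}
    (e : G ↪g G') (h : FamFree G' F) : FamFree G F :=
  fun H hH ⟨f⟩ => h H hH ⟨f.trans e⟩

lemma FamFree.mono_set {V : Type*} {G : SimpleGraph V} {A B : Set V} {F : Set GraphSig}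
    (hAB : A ⊆ B) (h : FamFree (G.induce B) F) : FamFree (G.induce A) F :=
  h.of_emb ⟨⟨fun d => ⟨d.1, hAB d.2⟩, fun a b hab => by
    apply Subtype.ext; simpa using hab⟩, Iff.rfl⟩

lemma componentsOK_iff {V : Type*} (G : SimpleGraph V) (A : Set V) (F1 F2 : Set GraphSig) :
    ComponentsOK (G.induce A) F1 F2 ↔ ∀ D : Set V, D ⊆ A → (G.induce D).Connected →
      FamFree (G.induce D) F1 ∨ FamFree (G.induce D) F2 := by
  constructor
  · intro h D hD hconn
    obtain ⟨d0⟩ := hconn.nonempty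
    let i : G.induce D →g G.induce A := ⟨fun d => ⟨d.1, hD d.2⟩, fun h => h⟩
    let c := (G.induce A).connectedComponentMk (i d0)
    have hc : ∀ d : D, i d ∈ c.supp := fun d => by
      rw [ConnectedComponent.mem_supp_iff]
      exact ConnectedComponent.sound ((hconn.preconnected d d0).map i)
    let e : G.induce D ↪g (G.induce A).induce c.supp :=
      ⟨⟨fun d => ⟨i d, hc d⟩, fun a b hab => by
        have h1 := congrArg (fun x => x.1.1) hab
        exact Subtype.ext h1⟩, Iff.rfl⟩
    exact (h c).imp (fun h => h.of_emb e) (fun h => h.of_emb e)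
  · intro h c
    have hmem : ∀ x : c.supp, x.1.1 ∈ (Subtype.val '' c.supp : Set V) :=
      fun x => ⟨x.1, x.2, rfl⟩
    let e : (G.induce A).induce c.supp ↪g G.induce (Subtype.val '' c.supp) :=
      ⟨⟨fun x => ⟨x.1.1, hmem x⟩, fun a b hab => by
        have h1 := congrArg (fun x => x.1) hab
        exact Subtype.ext (Subtype.ext h1)⟩, Iff.rfl⟩
    have hs : Function.Surjective e := by
      rintro ⟨_, x, hx, rfl⟩
      exact ⟨⟨x, hx⟩, rfl⟩
    have hcc : ((G.induce A).induce c.supp).Connected := c.connected_toSimpleGraph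
    have hconn : (G.induce (Subtype.val '' c.supp)).Connected := by
      have := hcc.nonempty.map e
      refine ⟨?_⟩
      exact hcc.preconnected.map e.toHom hs
    exact (h _ (by rintro _ ⟨x, _, rfl⟩; exact x.2) hconn).imp
      (fun h => h.of_emb e) (fun h => h.of_emb e)

lemma free_of_ok {F1 F2 Fi : Set GraphSig}
    (hF1 : ∀ H ∈ F1, H.2.Connected) (hF2 : ∀ H ∈ F2, H.2.Connected)
    (hi : Fi = F1 ∨ Fi = F2) {V : Type} {G : SimpleGraph V} {C B A : Set V}
    (hc : FamFree (G.induce C) (Fi \ spFamily F1 F2)) (hBC : B ⊆ C) (hBA : B ⊆ A)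
    (h : ComponentsOK (G.induce A) F1 F2) : FamFree (G.induce B) Fi := by
  rintro H hH ⟨f⟩
  have hHc : H.2.Connected := by
    rcases hi with rfl | rfl
    exacts [hF1 _ hH, hF2 _ hH]
  have hsp : H ∈ spFamily F1 F2 := by
    by_contra hn
    exact hc.mono_set hBC H ⟨hH, hn⟩ ⟨f⟩
  let D : Set V := Set.range fun x => (f x).1
  let e : H.2 ↪g G.induce D := ⟨⟨fun x => ⟨(f x).1, x, rfl⟩, fun a b hab => by
    have h1 := congrArg (fun x => x.1) hab
    exact f.injective (Subtype.ext h1)⟩, f.map_rel_iff⟩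
  have hs : Function.Surjective e := by
    rintro ⟨_, x, rfl⟩
    exact ⟨x, rfl⟩
  have hconn : (G.induce D).Connected := by
    have := hHc.nonempty.map e
    exact ⟨hHc.preconnected.map e.toHom hs⟩
  have hDA : D ⊆ A := by
    rintro _ ⟨x, rfl⟩
    exact hBA (f x).2
  have key := ((componentsOK_iff G A F1 F2).1 h D hDA hconn).imp
    (fun h => h.of_emb e) (fun h => h.of_emb e)
  have self : ∀ F, H ∈ F → ¬ FamFree H.2 F := fun F hF hh => hh H hF ⟨RelEmbedding.refl _⟩
  rcases hsp with ⟨h1, K, hK, hHK⟩ | ⟨h1, K, hK, hHK⟩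
  · rcases key with k | k
    · exact self _ h1 k
    · exact k K hK hHK
  · rcases key with k | k
    · exact k K hK hHK
    · exact self _ h1 k

theorem stmt10 (F1 F2 : Set GraphSig)
    (hF1 : ∀ H ∈ F1, H.2.Connected) (hF2 : ∀ H ∈ F2, H.2.Connected)
    (Fi : Set GraphSig) (hi : Fi = F1 ∨ Fi = F2)
    {V : Type} [Fintype V] (G : SimpleGraph V) (c : G.ConnectedComponent)
    (hc : FamFree (G.induce c.supp) (Fi \ spFamily F1 F2))
    (m : ℕ)
    (hm_ex : ∃ X : Set V, X ⊆ c.supp ∧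
        FamFree (G.induce (c.supp \ X)) Fi ∧ X.ncard = m)
    (hm_min : ∀ X : Set V, X ⊆ c.supp →
        FamFree (G.induce (c.supp \ X)) Fi → m ≤ X.ncard)
    (k : ℕ) :
    (∃ S : Set V, S.ncard ≤ k ∧ ComponentsOK (G.induce Sᶜ) F1 F2) ↔
      (m ≤ k ∧ ∃ S' : Set V, S' ⊆ c.suppᶜ ∧ S'.ncard ≤ k - m ∧
        ComponentsOK (G.induce (c.suppᶜ \ S')) F1 F2) := by
  constructor
  · rintro ⟨S, hS, hok⟩
    have hm := hm_min (S ∩ c.supp) Set.inter_subset_right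
      (free_of_ok hF1 hF2 hi hc Set.sdiff_subset (fun x hx hxS => hx.2 ⟨hxS, hx.1⟩) hok)
    have hcard := Set.ncard_inter_add_ncard_sdiff_eq_ncard S c.supp S.toFinite
    refine ⟨by omega, S \ c.supp, fun x hx => hx.2, by omega, ?_⟩
    rw [componentsOK_iff] at hok ⊢
    exact fun D hD => hok D (fun x hx hxS => (hD hx).2 ⟨hxS, (hD hx).1⟩)
  · rintro ⟨hmk, S', hS', hcard, hok⟩
    obtain ⟨X, hX, hfree, rfl⟩ := hm_ex
    refine ⟨X ∪ S', (Set.ncard_union_le _ _).trans (by omega), ?_⟩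
    rw [componentsOK_iff] at hok ⊢
    intro D hD hconn
    have hsame : ∀ x ∈ D, ∀ y ∈ D, x ∈ c.supp → y ∈ c.supp := by
      intro x hx y hy hxc
      rw [ConnectedComponent.mem_supp_iff] at hxc ⊢
      rw [← hxc]
      exact ConnectedComponent.sound
        ((hconn.preconnected ⟨y, hy⟩ ⟨x, hx⟩).map (Embedding.induce D).toHom)
    by_cases hDc : ∃ x ∈ D, x ∈ c.supp
    · obtain ⟨x, hx, hxc⟩ := hDc
      have hsub : D ⊆ c.supp \ X :=
        fun y hy => ⟨hsame x hx y hy hxc, fun hyX => hD hy (Or.inl hyX)⟩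
      have := hfree.mono_set hsub
      rcases hi with rfl | rfl
      exacts [Or.inl this, Or.inr this]
    · exact hok D (fun y hy => ⟨fun hyc => hDc ⟨y, hy, hyc⟩, fun hyS => hD hy (Or.inr hyS)⟩) hconn
end

section
/- Let G be a graph containing no induced cycle C_j for any 4 ≤ j ≤ 10. Let J* ⊆ V(G) with G[J*] isomorphic to the long-claw and T* ⊆ V(G) with G[T*] isomorphic to the triangle K_3, such that d := d_G(J*,T*) is finite and (J*,T*) is a closest long-claw–triangle pair: for all J, T ⊆ V(G) with G[J] isomorphic to the long-claw, G[T] isomorphic to K_3 and d_G(J,T) finite, one has d ≤ d_G(J,T). Assume d ≥ 2 and let P* = x_0 x_1 ⋯ x_d be a shortest path in G with x_0 = u ∈ J* and x_d = v ∈ T*. Let C be the connected component of G − (J* ∪ T*) containing x_1. Then: (a) {x_1,…,x_{d−1}} ⊆ V(C), and every vertex of V(C) \ {x_1,…,x_{d−1}} has exactly one neighbor in G, and that neighbor belongs to {x_1,…,x_{d−1}} (so C is a caterpillar with spine x_1 ⋯ x_{d−1}); (b) the only edges of G between V(C) and J* ∪ T* are {u, x_1} and {x_{d−1}, v}. -/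
open SimpleGraph

/-- The long-claw: center `0`, middle vertices `1`, `2`, `3`, and
leaves `4`, `5`, `6` with edges `0-i` and `i-(i+3)` for `i = 1, 2, 3`. -/
def longClawGraph : SimpleGraph (Fin 7) :=
  SimpleGraph.fromEdgeSet {s(0, 1), s(0, 2), s(0, 3), s(1, 4), s(2, 5), s(3, 6)}


theorem isoRange_aux {V W : Type*} (G : SimpleGraph V) (H : SimpleGraph W) (g : W → V)
    (hg : Function.Injective g) (h : ∀ a b, G.Adj (g a) (g b) ↔ H.Adj a b) :
    Nonempty (H ≃g G.induce (Set.range g)) :=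
  ⟨{ toEquiv := Equiv.ofInjective g hg
     map_rel_iff' := by
      intro a b
      simpa using h a b }⟩

instance lcDec : DecidableRel longClawGraph.Adj := fun a b =>
  decidable_of_iff ((a ≠ b) ∧ (s(a, b) = s(0, 1) ∨ s(a, b) = s(0, 2) ∨ s(a, b) = s(0, 3) ∨
    s(a, b) = s(1, 4) ∨ s(a, b) = s(2, 5) ∨ s(a, b) = s(3, 6))) (by
    unfold longClawGraph
    rw [SimpleGraph.fromEdgeSet_adj]
    simp only [Set.mem_insert_iff, Set.mem_singleton_iff]
    tauto)

def cpUp (a : Fin 7) : List (Fin 7) :=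
  if a = 0 then [0] else if a ≤ 3 then [a, 0] else [a, a - 3, 0]

def cpath (a b : Fin 7) : List (Fin 7) :=
  if longClawGraph.Adj a b then [a, b] else cpUp a ++ (cpUp b).dropLast.reverse

set_option maxRecDepth 100000 in
theorem cpath_spec : ∀ a b : Fin 7, a ≠ b → 2 ≤ (cpath a b).length ∧ (cpath a b).length ≤ 5 ∧
    (cpath a b).getD 0 0 = a ∧ (cpath a b).getD ((cpath a b).length - 1) 0 = b ∧
    ∀ j < 5, j < (cpath a b).length → ∀ i < j,
      (longClawGraph.Adj ((cpath a b).getD i 0) ((cpath a b).getD j 0) ↔ j = i + 1) ∧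
      ((cpath a b).getD i 0) ≠ ((cpath a b).getD j 0) := by
  decide

theorem lc_rows : ∀ a b : Fin 7,
    (∀ k, longClawGraph.Adj a k ↔ longClawGraph.Adj b k) → a = b := by
  decide

structure Core {V : Type} (G : SimpleGraph V) (d : ℕ) (f : Fin 7 → V) (T : Set V) (x : ℕ → V)
    (R S : ℕ → V → Prop) : Prop where
  hd : 2 ≤ d
  fadj : ∀ a b, G.Adj (f a) (f b) ↔ longClawGraph.Adj a b
  finj : Function.Injective f
  cyc : ∀ n, 4 ≤ n → n ≤ 10 → ∀ c : ℕ → V,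
    (∀ i j, i < j → j < n → (G.Adj (c i) (c j) ↔ j = i + 1 ∨ (i = 0 ∧ j + 1 = n))) →
    (∀ i j, i < j → j < n → c i ≠ c j) → False
  Tadj : ∀ a ∈ T, ∀ b ∈ T, a ≠ b → G.Adj a b
  Tne : ∀ a ∈ T, ∃ b ∈ T, b ≠ a
  x0 : ∃ a, x 0 = f a
  xd : x d ∈ T
  xadj : ∀ i < d, G.Adj (x i) (x (i+1))
  R0 : ∀ a, R 0 (f a)
  Rs : ∀ n a b, R n a → G.Adj a b → R (n+1) b
  S0 : ∀ a ∈ T, S 0 a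
  Ss : ∀ n a b, S n a → G.Adj a b → S (n+1) b
  RS : ∀ n m a, R n a → S m a → d ≤ n + m
  tri : ∀ n a b c, R n a → n < d → G.Adj a b → G.Adj b c → G.Adj a c → False
  claw : ∀ n (g : Fin 7 → V) k, S n (g k) → n < d →
    (∀ a b, a < b → (G.Adj (g a) (g b) ↔ longClawGraph.Adj a b)) → False

namespace Core
variable {V : Type} {G : SimpleGraph V} {d : ℕ} {f : Fin 7 → V} {T : Set V} {x : ℕ → V}
    {R S : ℕ → V → Prop}

theorem glue (h : Core G d f T x R S) (k m : ℕ) (hk : k ≤ 4) (hm : 1 ≤ m)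
    (hm3 : m ≤ 3) (hkm : 3 ≤ k + m) (q z : ℕ → V)
    (hq : ∀ j ≤ k, ∀ i < j, (G.Adj (q i) (q j) ↔ j = i + 1) ∧ q i ≠ q j)
    (hz : ∀ j < m, ∀ i < j, (G.Adj (z i) (z j) ↔ j = i + 1) ∧ z i ≠ z j)
    (hqz : ∀ i ≤ k, ∀ j < m, (G.Adj (q i) (z j) ↔ (i = 0 ∧ j = 0) ∨ (i = k ∧ j + 1 = m)) ∧
      q i ≠ z j) : False := by
  refine h.cyc (k + 1 + m) (by omega) (by omega) (fun i => if i ≤ k then q i else z (m + k - i))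
    ?_ ?_
  · intro i j hij hj
    by_cases h1 : j ≤ k
    · have : i ≤ k := by omega
      simp only [h1, this, if_true]
      rw [(hq j h1 i hij).1]; omega
    · by_cases h2 : i ≤ k
      · simp only [h1, h2, if_true, if_false]
        rw [(hqz i h2 (m+k-j) (by omega)).1]; omega
      · simp only [h1, h2, if_false]
        rw [G.adj_comm, (hz (m+k-i) (by omega) (m+k-j) (by omega)).1]; omega
  · intro i j hij hj
    by_cases h1 : j ≤ k
    · have : i ≤ k := by omega
      simp only [h1, this, if_true]
      exact (hq j h1 i hij).2
    · by_cases h2 : i ≤ k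
      · simp only [h1, h2, if_true, if_false]
        exact (hqz i h2 (m+k-j) (by omega)).2
      · simp only [h1, h2, if_false]
        exact (hz (m+k-i) (by omega) (m+k-j) (by omega)).2.symm

theorem c4 (h : Core G d f T x R S) {a b c e : V} (h1 : G.Adj a b) (h2 : G.Adj b c)
    (h3 : G.Adj c e) (h4 : G.Adj e a) (n1 : ¬ G.Adj a c) (n2 : ¬ G.Adj b e)
    (k1 : a ≠ c) (k2 : b ≠ e) : False := by
  have e1 := h1.ne
  have e2 := h2.ne
  have e3 := h3.ne
  have e4 := h4.ne
  refine h.cyc 4 le_rfl (by omega) (fun i => [a, b, c, e].getD i a) ?_ ?_ <;>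
  · intro i j hij hj
    interval_cases j <;> interval_cases i <;> simp_all [G.adj_comm] <;> grind

theorem c5 (h : Core G d f T x R S) {a b c e r : V} (h1 : G.Adj a b) (h2 : G.Adj b c)
    (h3 : G.Adj c e) (h4 : G.Adj e r) (h5 : G.Adj r a) (n1 : ¬ G.Adj a c) (n2 : ¬ G.Adj b e)
    (n3 : ¬ G.Adj c r) (n4 : ¬ G.Adj e a) (n5 : ¬ G.Adj r b) : False := by
  have e1 := h1.ne
  have e2 := h2.ne
  have e3 := h3.ne
  have e4 := h4.ne
  have e5 := h5.ne
  have k1 : a ≠ c := by rintro rfl; exact n4 h3.symm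
  have k2 : b ≠ e := by rintro rfl; exact n5 h4.symm
  have k3 : c ≠ r := by rintro rfl; exact n1 h5.symm
  have k4 : e ≠ a := by rintro rfl; exact n2 h1.symm
  have k5 : r ≠ b := by rintro rfl; exact n3 h2.symm
  refine h.cyc 5 (by omega) (by omega) (fun i => [a, b, c, e, r].getD i a) ?_ ?_ <;>
  · intro i j hij hj
    interval_cases j <;> interval_cases i <;> simp_all [G.adj_comm] <;> grind [SimpleGraph.Adj.symm]

/-- at most one neighbour in the claw -/
theorem oneJ (h : Core G d f T x R S) {w : V} (hw : ∀ a, w ≠ f a) {a b : Fin 7}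
    (ha : G.Adj w (f a)) (hb : G.Adj w (f b)) : a = b := by
  by_contra hab
  have key : ∀ k, 1 ≤ k → k ≤ 4 → ∀ q : ℕ → Fin 7,
      (∀ j ≤ k, ∀ i < j, (longClawGraph.Adj (q i) (q j) ↔ j = i + 1) ∧ q i ≠ q j) →
      G.Adj w (f (q 0)) → G.Adj w (f (q k)) → False := by
    intro k
    induction k using Nat.strong_induction_on with
    | _ k ih =>
    intro hk1 hk4 q hq h0 hk
    rcases Nat.eq_or_lt_of_le hk1 with rfl | hk2
    · have : G.Adj (f (q 0)) (f (q 1)) := (h.fadj _ _).2 ((hq 1 le_rfl 0 (by omega)).1.2 rfl)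
      exact h.tri 0 _ _ _ (h.R0 (q 0)) (by have := h.hd; omega) this hk.symm h0.symm
    · refine h.glue k 1 hk4 le_rfl (by omega) (by omega) (fun i => f (q i)) (fun _ => w) ?_ ?_ ?_
      · intro j hj i hi
        rw [h.fadj]
        exact ⟨(hq j hj i hi).1, fun hh => (hq j hj i hi).2 (h.finj hh)⟩
      · intro j hj i hi; omega
      · intro i hi j hj
        refine ⟨⟨?_, ?_⟩, (hw _).symm⟩
        · intro hadj
          by_contra hne
          exact ih i (by omega) (by omega) (by omega) q
            (fun j hj => hq j (by omega)) h0 hadj.symm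
        · rintro (⟨rfl, -⟩ | ⟨rfl, -⟩)
          · exact h0.symm
          · exact hk.symm
  obtain ⟨h2, h5, e0, e1, hp⟩ := cpath_spec a b hab
  refine key ((cpath a b).length - 1) (by omega) (by omega) (fun i => (cpath a b).getD i 0)
    (fun j hj i hi => hp j (by omega) (by omega) i hi) ?_ ?_
  · simp only [e0]; exact ha
  · simp only [e1]; exact hb

theorem Rx (h : Core G d f T x R S) : ∀ i ≤ d, R i (x i) := by
  intro i
  induction i with
  | zero => obtain ⟨a, ha⟩ := h.x0; intro _; rw [ha]; exact h.R0 a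
  | succ i ih => intro hi; exact h.Rs _ _ _ (ih (by omega)) (h.xadj i (by omega))

theorem Sx' (h : Core G d f T x R S) : ∀ i ≤ d, S i (x (d - i)) := by
  intro i
  induction i with
  | zero => intro _; exact h.S0 _ h.xd
  | succ i ih =>
    intro hi
    have := h.xadj (d - (i+1)) (by omega)
    rw [show d - (i+1) + 1 = d - i by omega] at this
    exact h.Ss _ _ _ (ih (by omega)) this.symm

theorem Sx (h : Core G d f T x R S) (i : ℕ) (hi : i ≤ d) : S (d - i) (x i) := by
  have := h.Sx' (d - i) (by omega)
  rwa [show d - (d - i) = i by omega] at this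

theorem xx (h : Core G d f T x R S) {i j : ℕ} (hij : i < j) (hj : j ≤ d) :
    (G.Adj (x i) (x j) ↔ j = i + 1) ∧ x i ≠ x j := by
  have hR := h.Rx i (by omega)
  have hS := h.Sx j hj
  refine ⟨⟨fun ha => ?_, ?_⟩, ?_⟩
  · have := h.RS _ _ _ (h.Rs _ _ _ hR ha) hS; omega
  · rintro rfl; exact h.xadj i (by omega)
  · intro e; rw [e] at hR; have := h.RS _ _ _ hR hS; omega

theorem xJ (h : Core G d f T x R S) {i : ℕ} (hi : 1 ≤ i) (hd : i ≤ d) (a : Fin 7) : x i ≠ f a := by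
  intro e
  have := h.RS 0 _ _ (h.R0 a) (e ▸ h.Sx i hd); omega

theorem xT (h : Core G d f T x R S) {i : ℕ} (hd : i < d) : x i ∉ T := by
  intro e
  have := h.RS _ 0 _ (h.Rx i hd.le) (h.S0 _ e); omega

theorem xadjJ (h : Core G d f T x R S) {i : ℕ} (hi : 1 ≤ i) (hd : i ≤ d) (a : Fin 7)
    (ha : G.Adj (x i) (f a)) : i = 1 ∧ f a = x 0 := by
  have h1 := h.RS _ _ _ (h.Rs _ _ _ (h.R0 a) ha.symm) (h.Sx i hd)
  have : i = 1 := by omega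
  subst this
  obtain ⟨b, hb⟩ := h.x0
  have h2 := h.xadj 0 (by omega)
  rw [hb] at h2 ⊢
  exact ⟨rfl, congrArg f (h.oneJ (h.xJ le_rfl hd) ha h2.symm)⟩

theorem xadjT (h : Core G d f T x R S) {i : ℕ} (hd : i < d) (t : V) (ht : t ∈ T)
    (ha : G.Adj (x i) t) : i = d - 1 ∧ t = x d := by
  have h1 := h.RS _ _ _ (h.Rs _ _ _ (h.Rx i hd.le) ha) (h.S0 _ ht)
  have : i = d - 1 := by omega
  refine ⟨this, ?_⟩
  by_contra hne
  have h2 := h.xadj i hd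
  rw [show i + 1 = d by omega] at h2
  exact h.tri i _ _ _ (h.Rx i hd.le) hd h2 (h.Tadj _ h.xd _ ht (Ne.symm hne)) ha

theorem JT (h : Core G d f T x R S) (a : Fin 7) (t : V) (ht : t ∈ T) :
    ¬ G.Adj (f a) t ∧ f a ≠ t := by
  have := h.hd
  constructor
  · intro ha
    have := h.RS _ _ _ (h.Rs _ _ _ (h.R0 a) ha) (h.S0 _ ht); omega
  · intro e
    have := h.RS _ _ _ (h.R0 a) (e ▸ h.S0 _ ht); omega

theorem wx (h : Core G d f T x R S) {w : V} {i : ℕ} (hi1 : 1 ≤ i) (hi : i < d)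
    (hw : ∀ j ≤ d, w ≠ x j) (ha : G.Adj w (x i)) {j : ℕ} (hj : j ≤ d) (hb : G.Adj w (x j)) :
    j = i := by
  have h1 := h.RS _ _ _ (h.Rs _ _ _ (h.Rs _ _ _ (h.Rx i hi.le) ha.symm) hb) (h.Sx j hj)
  have h2 := h.RS _ _ _ (h.Rs _ _ _ (h.Rs _ _ _ (h.Rx j hj) hb.symm) ha) (h.Sx i hi.le)
  have T1 : ∀ k, k < d → G.Adj w (x k) → G.Adj w (x (k+1)) → False := fun k hk h1 h2 =>
    h.tri k _ _ _ (h.Rx k hk.le) hk (h.xadj k hk) h2.symm h1.symm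
  have T2 : ∀ k, k + 2 ≤ d → G.Adj w (x k) → G.Adj w (x (k+2)) → False := by
    intro k hk h1 h2
    refine h.c4 h1 (h.xadj k (by omega)) (h.xadj (k+1) (by omega)) h2.symm
      (fun h3 => T1 k (by omega) h1 h3) ?_ (hw _ (by omega)) (h.xx (by omega) hk).2
    intro h3
    have := (h.xx (by omega) hk).1.1 h3
    omega
  by_contra hne
  have : j = i + 1 ∨ j = i + 2 ∨ i = j + 1 ∨ i = j + 2 := by omega
  rcases this with rfl | rfl | rfl | rfl
  · exact T1 _ (by omega) ha hb
  · exact T2 _ (by omega) ha hb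
  · exact T1 _ (by omega) hb ha
  · exact T2 _ (by omega) hb ha

theorem wJ (h : Core G d f T x R S) {w : V} {i : ℕ} (hi1 : 1 ≤ i) (hi : i < d)
    (hw : ∀ j ≤ d, w ≠ x j) (hwJ : ∀ a, w ≠ f a) (ha : G.Adj w (x i)) (a : Fin 7) :
    ¬ G.Adj w (f a) := by
  intro hb
  have h1 := h.RS _ _ _ (h.Rs _ _ _ (h.Rs _ _ _ (h.R0 a) hb.symm) ha) (h.Sx i hi.le)
  have hi2 : i ≤ 2 := by omega
  obtain ⟨b, hxb⟩ := h.x0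
  have hab : a ≠ b := by
    rintro rfl
    have := h.wx hi1 hi hw ha (Nat.zero_le d) (hxb ▸ hb)
    omega
  obtain ⟨h2, h5, e0, e1, hp⟩ := cpath_spec a b hab
  set l := cpath a b with hl
  refine h.glue (l.length - 1) (i + 1) (by omega) (by omega) (by omega) (by omega)
    (fun j => f (l.getD j 0)) (fun j => if j = 0 then w else x (i + 1 - j)) ?_ ?_ ?_
  · intro j hj i hi
    rw [h.fadj]
    exact ⟨(hp j (by omega) (by omega) i hi).1,
      fun hh => (hp j (by omega) (by omega) i hi).2 (h.finj hh)⟩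
  · intro j hj k hk
    have hj0 : j ≠ 0 := by omega
    simp only [hj0, if_false]
    by_cases hk0 : k = 0
    · simp only [hk0, if_true]
      refine ⟨⟨fun h3 => ?_, fun h3 => ?_⟩, hw _ (by omega)⟩
      · have := h.wx hi1 hi hw ha (by omega) h3; omega
      · subst h3; subst hk0; simpa using ha
    · simp only [hk0, if_false]
      have := h.xx (i := i + 1 - j) (j := i + 1 - k) (by omega) (by omega)
      refine ⟨?_, this.2.symm⟩
      rw [G.adj_comm, this.1]; omega
  · intro j hj k hk
    by_cases hk0 : k = 0
    · simp only [hk0, if_true]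
      refine ⟨⟨fun h3 => ?_, fun h3 => ?_⟩, (hwJ _).symm⟩
      · left
        refine ⟨?_, trivial⟩
        have h4 := h.oneJ hwJ hb h3.symm
        by_contra hj0
        have := (hp j (by omega) (by omega) 0 (by omega)).2
        exact this (e0.trans h4)
      · have : j = 0 := by omega
        subst this
        simp only [e0]; exact hb.symm
    · simp only [hk0, if_false]
      refine ⟨⟨fun h3 => ?_, fun h3 => ?_⟩, (h.xJ (by omega) (by omega) _).symm⟩
      · right
        obtain ⟨h4, h6⟩ := h.xadjJ (by omega) (by omega) _ h3.symm
        rw [hxb] at h6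
        have h7 := h.finj h6
        refine ⟨?_, by omega⟩
        by_contra hjk
        have := (hp (l.length - 1) (by omega) (by omega) j (by omega)).2
        exact this (h7.trans e1.symm)
      · have h3 : j = l.length - 1 ∧ k + 1 = i + 1 := by tauto
        have h4 : j = l.length - 1 := h3.1
        have h6 : i + 1 - k = 1 := by omega
        subst h4
        simp only [e1, h6]
        rw [← hxb]
        exact h.xadj 0 (by omega)

theorem wT (h : Core G d f T x R S) {w : V} {i : ℕ} (hi1 : 1 ≤ i) (hi : i < d)
    (hw : ∀ j ≤ d, w ≠ x j) (ha : G.Adj w (x i)) (t : V) (ht : t ∈ T) :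
    ¬ G.Adj w t := by
  intro hb
  have h1 := h.RS _ _ _ (h.Rs _ _ _ (h.Rs _ _ _ (h.Rx i hi.le) ha.symm) hb) (h.S0 _ ht)
  have htv : t ≠ x d := by
    rintro rfl
    have := h.wx hi1 hi hw ha le_rfl hb
    omega
  have hA := h.Tadj _ ht _ h.xd htv
  have hwv : ¬ G.Adj w (x d) := fun h3 => by
    have := h.wx hi1 hi hw ha le_rfl h3
    omega
  have : d = i + 1 ∨ d = i + 2 := by omega
  have hx : ∀ j, j < d → ¬ G.Adj (x j) t := fun j hj h3 => htv (h.xadjT hj t ht h3).2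
  rcases this with rfl | rfl
  · exact h.c4 hb hA (h.xadj i (by omega)).symm ha.symm hwv (fun h3 => hx i (by omega) h3.symm)
      (hw _ le_rfl) (fun e => h.xT hi (e ▸ ht))
  · refine h.c5 hb hA (h.xadj (i+1) (by omega)).symm (h.xadj i (by omega)).symm ha.symm hwv
      (fun h3 => hx _ (by omega) h3.symm) (fun h3 => ?_) (fun h3 => ?_) (hx i hi)
    · have := (h.xx (i := i) (j := i+2) (by omega) le_rfl).1.1 h3.symm
      omega
    · have := h.wx hi1 hi hw ha (j := i+1) (by omega) h3.symm
      omega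

theorem lcExt : ∀ a : Fin 7, ∃ b, longClawGraph.Adj a b := by decide

theorem pend (h : Core G d f T x R S) {w : V} {i : ℕ} (hi1 : 1 ≤ i) (hi : i < d)
    (hw : ∀ j ≤ d, w ≠ x j) (hwJ : ∀ a, w ≠ f a) (hwT : w ∉ T) (ha : G.Adj w (x i)) (y : V)
    (hy : G.Adj w y) : y = x i := by
  by_contra hyi
  obtain ⟨b, hxb⟩ := h.x0
  obtain ⟨c, hbc⟩ := lcExt b
  obtain ⟨t, ht, htv⟩ := h.Tne _ h.xd
  have hc0 : G.Adj (f c) (x 0) := by rw [hxb, h.fadj]; exact hbc.symm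
  have htA := h.Tadj _ ht _ h.xd htv
  -- the extended path
  obtain ⟨X, hX⟩ : ∃ X : ℕ → V, X = fun k => if k = 0 then f c else if k = d + 2 then t else x (k-1) :=
    ⟨_, rfl⟩
  have X0 : X 0 = f c := by simp [hX]
  have Xl : X (d+2) = t := by simp [hX]
  have Xm : ∀ k, k ≤ d → X (k+1) = x k := by
    intro k hk
    simp [hX]; omega
  have cases3 : ∀ k, k ≤ d + 2 → k = 0 ∨ k = d + 2 ∨ ∃ m ≤ d, k = m + 1 := by
    intro k hk
    by_cases h0 : k = 0
    · exact Or.inl h0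
    by_cases h1 : k = d + 2
    · exact Or.inr (Or.inl h1)
    · exact Or.inr (Or.inr ⟨k-1, by omega, by omega⟩)
  have XX : ∀ k m, k < m → m ≤ d + 2 → (G.Adj (X k) (X m) ↔ m = k + 1) := by
    intro k m hkm hm
    rcases cases3 k (by omega) with rfl | rfl | ⟨k, hk, rfl⟩
    · rcases cases3 m hm with rfl | rfl | ⟨m, hm', rfl⟩
      · omega
      · rw [X0, Xl]
        have := (h.JT c t ht).1
        constructor
        · intro h3; exact absurd h3 this
        · omega
      · rw [X0, Xm m hm']
        constructor
        · intro h3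
          by_contra hm0
          obtain ⟨_, h5⟩ := h.xadjJ (i := m) (by omega) hm' c h3.symm
          rw [h5] at hc0
          exact G.irrefl hc0
        · intro h3
          have : m = 0 := by omega
          subst this; exact hc0
    · omega
    · rcases cases3 m hm with rfl | rfl | ⟨m, hm', rfl⟩
      · omega
      · rw [Xl, Xm k hk]
        constructor
        · intro h3
          by_contra hkd
          exact htv (h.xadjT (i := k) (by omega) t ht h3).2
        · intro h3
          have : k = d := by omega
          subst this; exact htA.symm
      · rw [Xm k hk, Xm m hm', (h.xx (i := k) (j := m) (by omega) hm').1]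
        omega
  have wX : ∀ k, k ≤ d + 2 → (G.Adj w (X k) ↔ k = i + 1) := by
    intro k hk'
    rcases cases3 k hk' with rfl | rfl | ⟨k, hk, rfl⟩
    · rw [X0]
      have := h.wJ hi1 hi hw hwJ ha c
      constructor
      · intro h3; exact absurd h3 this
      · omega
    · rw [Xl]
      have := h.wT hi1 hi hw ha t ht
      constructor
      · intro h3; exact absurd h3 this
      · omega
    · rw [Xm k hk]
      constructor
      · intro h3; have := h.wx hi1 hi hw ha hk h3; omega
      · intro h3
        have : k = i := by omega
        subst this; exact ha
  have hSX : ∃ n < d, S n (X (i+2)) := by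
    refine ⟨d - (i+1), by omega, ?_⟩
    rw [Xm (i+1) (by omega)]
    exact h.Sx _ (by omega)
  have hxi : X (i+1) = x i := Xm i hi.le
  have y1 : ¬ G.Adj y (X (i+1)) := by
    rw [hxi]; intro h3
    exact h.tri i _ _ _ (h.Rx i hi.le) hi h3.symm hy.symm ha.symm
  have wXi : G.Adj w (X (i+1)) := (wX _ (by omega)).2 rfl
  have adj1 : ∀ k, k < d + 2 → G.Adj (X k) (X (k+1)) := fun k hk => (XX _ _ (by omega) hk).2 rfl
  have yne : ∀ k, k ≤ d + 2 → y ≠ X k := by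
    rintro k hk rfl
    have := (wX k hk).1 hy
    subst this
    exact hyi hxi
  have wne : ∀ k, k ≤ d + 2 → w ≠ X k := by
    intro k hk'
    rcases cases3 k hk' with rfl | rfl | ⟨k, hk, rfl⟩
    · rw [X0]; exact hwJ c
    · rw [Xl]; rintro rfl; exact hwT ht
    · rw [Xm k hk]; exact hw k hk
  have wn : ∀ k, k ≤ d + 2 → k ≠ i + 1 → ¬ G.Adj w (X k) := fun k hk hne h3 => hne ((wX k hk).1 h3)
  have xn : ∀ k m, k + 1 < m → m ≤ d + 2 → ¬ G.Adj (X k) (X m) := fun k m hk hm h3 => by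
    have := (XX k m (by omega) hm).1 h3; omega
  have y2 : ¬ G.Adj y (X (i+2)) := fun h3 =>
    h.c4 hy h3 (adj1 (i+1) (by omega)).symm wXi.symm (wn _ (by omega) (by omega)) y1
      (wne _ (by omega)) (yne _ (by omega))
  have y0 : ¬ G.Adj y (X i) := fun h3 =>
    h.c4 hy h3 (adj1 i (by omega)) wXi.symm (wn _ (by omega) (by omega)) y1
      (wne _ (by omega)) (yne _ (by omega))
  have y3 : ¬ G.Adj y (X (i+3)) := fun h3 =>
    h.c5 hy h3 (adj1 (i+2) (by omega)).symm (adj1 (i+1) (by omega)).symm wXi.symm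
      (wn _ (by omega) (by omega)) y2 (fun h4 => xn _ _ (by omega) (by omega) h4.symm)
      (fun h4 => wn _ (by omega) (by omega) h4.symm) (fun h4 => y1 h4.symm)
  obtain ⟨k, rfl⟩ : ∃ k, i = k + 1 := ⟨i - 1, by omega⟩
  have y00 : ¬ G.Adj y (X k) := fun h3 =>
    h.c5 hy h3 (adj1 k (by omega)) (adj1 (k+1) (by omega)) wXi.symm
      (wn _ (by omega) (by omega)) y0 (fun h4 => xn _ _ (by omega) (by omega) h4)
      (fun h4 => wn _ (by omega) (by omega) h4.symm) (fun h4 => y1 h4.symm)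
  obtain ⟨n, hn, hSn⟩ := hSX
  have a0 := adj1 k (by omega)
  have a1 := adj1 (k+1) (by omega)
  have a2 := adj1 (k+2) (by omega)
  have a3 := adj1 (k+3) (by omega)
  have n1 := xn k (k+2) (by omega) (by omega)
  have n2 := xn k (k+3) (by omega) (by omega)
  have n3 := xn k (k+4) (by omega) (by omega)
  have n4 := xn (k+1) (k+3) (by omega) (by omega)
  have n5 := xn (k+1) (k+4) (by omega) (by omega)
  have n6 := xn (k+2) (k+4) (by omega) (by omega)
  have w1 := wn k (by omega) (by omega)
  have w2 := wn (k+1) (by omega) (by omega)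
  have w3 := wn (k+3) (by omega) (by omega)
  have w4 := wn (k+4) (by omega) (by omega)
  refine h.claw n ![X (k+2), w, X (k+1), X (k+3), y, X k, X (k+4)] 3 hSn hn ?_
  have tab : ∀ a b : Fin 7, a < b → (longClawGraph.Adj a b ↔ 
    (a = 0 ∧ b = 1) ∨ (a = 0 ∧ b = 2) ∨ (a = 0 ∧ b = 3) ∨ (a = 1 ∧ b = 4) ∨ (a = 2 ∧ b = 5) ∨
      (a = 3 ∧ b = 6)) := by decide
  intro a b hab
  rw [tab a b hab]
  fin_cases a <;> fin_cases b <;> first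
    | (exact absurd hab (by decide))
    | (simp; first | assumption | (rw [G.adj_comm]; assumption))

end Core

theorem stmt13 {V : Type} [Fintype V] (G : SimpleGraph V)
    (hC : ∀ j, 4 ≤ j → j ≤ 10 → ¬ ContainsInduced G (SimpleGraph.cycleGraph j))
    (Js Ts : Set V)
    (hJ : Nonempty (longClawGraph ≃g G.induce Js))
    (hT : Nonempty (triangleGraph ≃g G.induce Ts))
    (d : ℕ) (hd : eSetDist G Js Ts = (d : ℕ∞)) (hd2 : 2 ≤ d)
    (hclosest : ∀ J T : Set V, Nonempty (longClawGraph ≃g G.induce J) →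
      Nonempty (triangleGraph ≃g G.induce T) → eSetDist G J T < ⊤ →
      (d : ℕ∞) ≤ eSetDist G J T)
    (u v : V) (hu : u ∈ Js) (hv : v ∈ Ts)
    (p : G.Walk u v) (hp : p.IsPath) (hlen : p.length = d)
    (hx1 : p.getVert 1 ∈ (Js ∪ Ts)ᶜ) :
    -- (a) the spine is contained in the component `C`, and every other vertex of `C`
    -- has exactly one neighbor in `G`, and that neighbor lies on the spine
    ({w : V | ∃ i, 1 ≤ i ∧ i ≤ d - 1 ∧ w = p.getVert i} ⊆
        Subtype.val ''
          ((G.induce (Js ∪ Ts)ᶜ).connectedComponentMk ⟨p.getVert 1, hx1⟩).supp) ∧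
    (∀ w ∈ Subtype.val ''
        ((G.induce (Js ∪ Ts)ᶜ).connectedComponentMk ⟨p.getVert 1, hx1⟩).supp,
      w ∉ {w : V | ∃ i, 1 ≤ i ∧ i ≤ d - 1 ∧ w = p.getVert i} →
      ∃ i, 1 ≤ i ∧ i ≤ d - 1 ∧ G.Adj w (p.getVert i) ∧
        ∀ y, G.Adj w y → y = p.getVert i) ∧
    -- (b) the only edges of `G` between `C` and `Js ∪ Ts` are `{u, x 1}` and `{x (d-1), v}`
    (∀ w ∈ Subtype.val ''
        ((G.induce (Js ∪ Ts)ᶜ).connectedComponentMk ⟨p.getVert 1, hx1⟩).supp,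
      ∀ y ∈ Js ∪ Ts,
        (G.Adj w y ↔ ((w = p.getVert 1 ∧ y = u) ∨ (w = p.getVert (d - 1) ∧ y = v)))) := by
  obtain ⟨eJ⟩ := hJ
  obtain ⟨eT⟩ := hT
  obtain ⟨f, hf⟩ : ∃ f : Fin 7 → V, f = fun a => (eJ a : V) := ⟨_, rfl⟩
  have fmem : ∀ a, f a ∈ Js := fun a => by rw [hf]; exact (eJ a).2
  have fsurj : ∀ y ∈ Js, ∃ a, y = f a := fun y hy =>
    ⟨eJ.symm ⟨y, hy⟩, by rw [hf]; simp⟩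
  have fadj : ∀ a b, G.Adj (f a) (f b) ↔ longClawGraph.Adj a b := by
    intro a b
    rw [hf]
    exact eJ.map_rel_iff (a := a) (b := b)
  have finj : Function.Injective f := by
    intro a b hab
    rw [hf] at hab
    exact eJ.injective (Subtype.ext hab)
  have dist_le : ∀ (J T : Set V) (a b : V) (q : G.Walk a b), a ∈ J → b ∈ T →
      eSetDist G J T ≤ (q.length : ℕ∞) := by
    intro J T a b q ha hb
    unfold eSetDist
    exact (iInf_le_of_le a (iInf_le_of_le ha (iInf_le_of_le b (iInf_le_of_le hb le_rfl)))).trans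
      (SimpleGraph.edist_le q)
  have core : Core G d f Ts p.getVert
      (fun n a => ∃ j ∈ Js, ∃ q : G.Walk j a, q.length ≤ n)
      (fun n a => ∃ t ∈ Ts, ∃ q : G.Walk a t, q.length ≤ n) := by
    refine
    { hd := hd2, fadj := fadj, finj := finj
      cyc := ?_
      Tadj := ?_
      Tne := ?_
      x0 := ?_
      xd := ?_
      xadj := ?_
      R0 := fun a => ⟨f a, fmem a, SimpleGraph.Walk.nil, by simp⟩
      Rs := ?_
      S0 := fun a ha => ⟨a, ha, SimpleGraph.Walk.nil, by simp⟩
      Ss := ?_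
      RS := ?_
      tri := ?_
      claw := ?_ }
    · intro n hn hn' c hc hne
      refine hC n hn hn' ⟨⟨⟨fun i => c i.1, ?_⟩, ?_⟩⟩
      · intro i j hij
        by_contra h
        have h' : i.1 ≠ j.1 := fun e => h (Fin.ext e)
        rcases Nat.lt_or_gt_of_ne h' with h' | h'
        · exact hne _ _ h' j.2 hij
        · exact hne _ _ h' i.2 hij.symm
      · intro i j
        have hlt : ∀ i j : Fin n, i.1 < j.1 →
            ((cycleGraph n).Adj i j ↔ j.1 = i.1 + 1 ∨ (i.1 = 0 ∧ j.1 + 1 = n)) := by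
          intro i j hij
          have hi := i.2
          have hj := j.2
          rw [SimpleGraph.cycleGraph_adj']
          rw [Fin.coe_sub_iff_lt.2 hij, Fin.coe_sub_iff_le.2 (le_of_lt hij)]
          omega
        change G.Adj (c i.1) (c j.1) ↔ _
        rcases Nat.lt_trichotomy i.1 j.1 with h' | h' | h'
        · rw [hc _ _ h' j.2, hlt i j h']
        · have : i = j := Fin.ext h'
          subst this; simp
        · rw [G.adj_comm, (cycleGraph n).adj_comm, hc _ _ h' i.2, hlt j i h']
    · intro a ha b hb hab
      have := eT.symm.map_rel_iff (a := ⟨a, ha⟩) (b := ⟨b, hb⟩)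
      refine this.1 ?_
      change eT.symm ⟨a, ha⟩ ≠ eT.symm ⟨b, hb⟩
      intro e
      exact hab (congrArg Subtype.val (eT.symm.injective e))
    · intro a ha
      have : ∃ k : Fin 3, k ≠ eT.symm ⟨a, ha⟩ := exists_ne _
      obtain ⟨k, hk⟩ := this
      refine ⟨eT k, (eT k).2, fun e => hk ?_⟩
      have : eT k = ⟨a, ha⟩ := Subtype.ext e
      rw [← this]; simp
    · simpa using fsurj u hu
    · rw [← hlen]; simpa using hv
    · intro i hi
      exact p.adj_getVert_succ (by omega)
    · rintro n a b ⟨j, hj, q, hq⟩ hab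
      exact ⟨j, hj, q.concat hab, by simpa using hq⟩
    · rintro n a b ⟨t, ht, q, hq⟩ hab
      exact ⟨t, ht, SimpleGraph.Walk.cons hab.symm q, by simpa using hq⟩
    · rintro n m a ⟨j, hj, q, hq⟩ ⟨t, ht, q', hq'⟩
      have := dist_le Js Ts j t (q.append q') hj ht
      rw [hd, SimpleGraph.Walk.length_append] at this
      have := ENat.natCast_le_natCast.1 this
      omega
    · rintro n a b c ⟨j, hj, q, hq⟩ hn hab hbc hac
      have hne1 := hab.ne
      have hne2 := hbc.ne
      have hne3 := hac.ne
      have hiso := isoRange_aux G triangleGraph ![a, b, c] (by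
        intro i k
        fin_cases i <;> fin_cases k <;> simp [hne1, hne2, hne3, hne1.symm, hne2.symm, hne3.symm])
        (by
        intro i k
        fin_cases i <;> fin_cases k <;>
          simp [triangleGraph, hab, hbc, hac, hab.symm, hbc.symm, hac.symm])
      have h1 := dist_le Js (Set.range ![a, b, c]) j a q hj ⟨0, rfl⟩
      have h2 := hclosest _ _ ⟨eJ⟩ hiso (lt_of_le_of_lt h1 (ENat.natCast_lt_top _))
      have := ENat.natCast_le_natCast.1 (h2.trans h1)
      omega
    · rintro n g k ⟨t, ht, q, hq⟩ hn hg
      have hg' : ∀ a b, G.Adj (g a) (g b) ↔ longClawGraph.Adj a b := by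
        intro a b
        rcases lt_trichotomy a b with h' | h' | h'
        · exact hg a b h'
        · subst h'; simp
        · rw [G.adj_comm, longClawGraph.adj_comm]; exact hg b a h'
      have hiso := isoRange_aux G longClawGraph g (by
        intro a b hab
        refine lc_rows a b fun k => ?_
        rw [← hg', ← hg', hab]) hg'
      have h1 := dist_le (Set.range g) Ts _ t q ⟨k, rfl⟩ ht
      have h2 := hclosest _ _ hiso ⟨eT⟩ (lt_of_le_of_lt h1 (ENat.natCast_lt_top _))
      have := ENat.natCast_le_natCast.1 (h2.trans h1)
      omega
  have hx0 : p.getVert 0 = u := by simp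
  have hxd : p.getVert d = v := by rw [← hlen]; simp
  have xout : ∀ i, 1 ≤ i → i ≤ d - 1 → p.getVert i ∈ (Js ∪ Ts)ᶜ := by
    intro i h1 h2 h3
    rcases h3 with h3 | h3
    · obtain ⟨a, ha⟩ := fsurj _ h3
      exact core.xJ h1 (by omega) a ha
    · exact core.xT (by omega) h3
  have pendant : ∀ w, w ∈ (Js ∪ Ts)ᶜ → (¬ ∃ i, 1 ≤ i ∧ i ≤ d - 1 ∧ w = p.getVert i) →
      ∀ i, 1 ≤ i → i ≤ d - 1 → G.Adj w (p.getVert i) → ∀ y, G.Adj w y → y = p.getVert i := by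
    intro w hw hns i h1 h2 ha y hy
    refine core.pend h1 (by omega) ?_ ?_ ?_ ha y hy
    · rintro j hj rfl
      rcases Nat.eq_zero_or_pos j with rfl | hj0
      · exact hw (Or.inl (by rw [hx0]; exact hu))
      · by_cases hjd : j = d
        · subst hjd; exact hw (Or.inr (by rw [hxd]; exact hv))
        · exact hns ⟨j, hj0, by omega, rfl⟩
    · rintro a rfl; exact hw (Or.inl (fmem a))
    · intro h; exact hw (Or.inr h)
  have spine : ∀ i, 1 ≤ i → i ≤ d - 1 → ∃ h : p.getVert i ∈ (Js ∪ Ts)ᶜ,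
      (G.induce (Js ∪ Ts)ᶜ).Reachable ⟨p.getVert 1, hx1⟩ ⟨p.getVert i, h⟩ := by
    intro i hi
    induction i, hi using Nat.le_induction with
    | base => intro _; exact ⟨hx1, SimpleGraph.Reachable.refl _⟩
    | succ i hi ih =>
      intro h2
      obtain ⟨h, hr⟩ := ih (by omega)
      refine ⟨xout _ (by omega) h2, hr.trans (SimpleGraph.Adj.reachable ?_)⟩
      exact core.xadj i (by omega)
  have closed : ∀ a b : ((Js ∪ Ts)ᶜ : Set V), (G.induce (Js ∪ Ts)ᶜ).Walk a b →
      (∃ i, 1 ≤ i ∧ i ≤ d - 1 ∧ (G.Adj a (p.getVert i) ∨ a.1 = p.getVert i)) →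
      (∃ i, 1 ≤ i ∧ i ≤ d - 1 ∧ (G.Adj b (p.getVert i) ∨ b.1 = p.getVert i)) := by
    intro a b q
    induction q with
    | nil => exact id
    | @cons a c b hac q ih =>
      rintro ⟨i, h1, h2, h3⟩
      apply ih
      have hac' : G.Adj a.1 c.1 := hac
      by_cases hs : ∃ i, 1 ≤ i ∧ i ≤ d - 1 ∧ a.1 = p.getVert i
      · obtain ⟨k, hk1, hk2, hk⟩ := hs
        exact ⟨k, hk1, hk2, Or.inl (hk ▸ hac'.symm)⟩
      · rcases h3 with h3 | h3
        · exact ⟨i, h1, h2, Or.inr (pendant _ a.2 hs i h1 h2 h3 _ hac')⟩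
        · exact absurd ⟨i, h1, h2, h3⟩ hs
  have inC : ∀ w ∈ Subtype.val ''
        ((G.induce (Js ∪ Ts)ᶜ).connectedComponentMk ⟨p.getVert 1, hx1⟩).supp,
      w ∈ (Js ∪ Ts)ᶜ ∧ ∃ i, 1 ≤ i ∧ i ≤ d - 1 ∧ (G.Adj w (p.getVert i) ∨ w = p.getVert i) := by
    rintro _ ⟨w, hw, rfl⟩
    rw [SimpleGraph.ConnectedComponent.mem_supp_iff, SimpleGraph.ConnectedComponent.eq] at hw
    obtain ⟨q⟩ := hw.symm
    exact ⟨w.2, closed _ _ q ⟨1, le_rfl, by omega, Or.inr rfl⟩⟩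
  refine ⟨?_, ?_, ?_⟩
  · rintro _ ⟨i, h1, h2, rfl⟩
    obtain ⟨h, hr⟩ := spine i h1 h2
    refine ⟨⟨_, h⟩, ?_, rfl⟩
    rw [SimpleGraph.ConnectedComponent.mem_supp_iff, SimpleGraph.ConnectedComponent.eq]
    exact hr.symm
  · intro w hw hns
    obtain ⟨hw', i, h1, h2, h3⟩ := inC w hw
    rcases h3 with h3 | h3
    · exact ⟨i, h1, h2, h3, pendant w hw' hns i h1 h2 h3⟩
    · exact absurd ⟨i, h1, h2, h3⟩ hns
  · intro w hw y hy
    obtain ⟨hw', i, h1, h2, h3⟩ := inC w hw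
    constructor
    · intro hwy
      by_cases hs : ∃ i, 1 ≤ i ∧ i ≤ d - 1 ∧ w = p.getVert i
      · obtain ⟨k, hk1, hk2, rfl⟩ := hs
        rcases hy with hy | hy
        · obtain ⟨a, rfl⟩ := fsurj y hy
          obtain ⟨e1, e2⟩ := core.xadjJ hk1 (by omega) a hwy
          left; exact ⟨by rw [e1], e2.trans hx0⟩
        · obtain ⟨e1, e2⟩ := core.xadjT (by omega) y hy hwy
          right; exact ⟨by rw [← e1], e2.trans hxd⟩
      · rcases h3 with h3 | h3
        · have := pendant w hw' hs i h1 h2 h3 y hwy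
          subst this
          exact absurd hy (xout i h1 h2)
        · exact absurd ⟨i, h1, h2, h3⟩ hs
    · rintro (⟨rfl, rfl⟩ | ⟨rfl, rfl⟩)
      · have := core.xadj 0 (by omega)
        rw [hx0] at this
        exact this.symm
      · have := core.xadj (d-1) (by omega)
        rw [show d - 1 + 1 = d by omega, hxd] at this
        exact this
end

section
/- Let G be a graph, J* ⊆ V(G) with G[J*] isomorphic to the claw K_{1,3}, and T* ⊆ V(G) with G[T*] isomorphic to the triangle K_3, such that d := d_G(J*,T*) is finite and (J*,T*) is a closest claw–triangle pair: for all J, T ⊆ V(G) with G[J] ≅ K_{1,3}, G[T] ≅ K_3 and d_G(J,T) finite, one has d ≤ d_G(J,T). Assume d ≥ 2 and let P* = x_0 x_1 ⋯ x_d be a shortest path in G with x_0 = u ∈ J* and x_d = v ∈ T*. Call Q ⊆ V(G) a forbidden set if G[Q] is isomorphic to the net, the 3-sun, or a cycle C_k with k ≥ 4, or G[Q] is connected and contains both an induced claw and an induced triangle, and Q is minimal with this property (no proper subset of Q satisfies it). Then every forbidden set Q with Q ∩ {x_1,…,x_{d−1}} ≠ ∅ contains v. -/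
open SimpleGraph

/-- The net: a triangle `{0, 1, 2}` with pendant vertices `3`, `4`, `5`
attached to `0`, `1`, `2` respectively. -/
def netGraph : SimpleGraph (Fin 6) :=
  SimpleGraph.fromEdgeSet {s(0, 1), s(1, 2), s(0, 2), s(0, 3), s(1, 4), s(2, 5)}

/-- The 3-sun: a triangle `{0, 1, 2}` together with `3` adjacent exactly to `0, 1`,
`4` adjacent exactly to `1, 2`, and `5` adjacent exactly to `2, 0`. -/
def sunGraph : SimpleGraph (Fin 6) :=
  SimpleGraph.fromEdgeSet
    {s(0, 1), s(1, 2), s(0, 2), s(3, 0), s(3, 1), s(4, 1), s(4, 2), s(5, 2), s(5, 0)}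

/-- `Q` induces a net, a 3-sun or a cycle `C_k` with `k ≥ 4`, or `G[Q]` is connected
and contains both an induced claw and an induced triangle. -/
def PITBad {V : Type} (G : SimpleGraph V) (Q : Set V) : Prop :=
  (Nonempty (netGraph ≃g G.induce Q) ∨ Nonempty (sunGraph ≃g G.induce Q) ∨
    ∃ k, 4 ≤ k ∧ Nonempty (SimpleGraph.cycleGraph k ≃g G.induce Q)) ∨
  ((G.induce Q).Connected ∧ ContainsInduced (G.induce Q) clawGraph ∧
    ContainsInduced (G.induce Q) triangleGraph)

/-- A forbidden set: a minimal vertex set satisfying `PITBad`. -/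
def PITForbidden {V : Type} (G : SimpleGraph V) (Q : Set V) : Prop :=
  PITBad G Q ∧ ∀ Q' ⊂ Q, ¬ PITBad G Q'

lemma aux_tri {V : Type} (G : SimpleGraph V) {a b c : V} (h1 : G.Adj a b) (h2 : G.Adj a c)
    (h3 : G.Adj b c) : ∃ f : triangleGraph ↪g G, f 0 = a := by
  refine ⟨⟨⟨![a, b, c], ?_⟩, ?_⟩, rfl⟩
  · intro i j hij
    fin_cases i <;> fin_cases j <;>
      simp_all [h1.ne, h2.ne, h3.ne, h1.ne', h2.ne', h3.ne']
  · intro i j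
    change G.Adj (![a, b, c] i) (![a, b, c] j) ↔ _
    fin_cases i <;> fin_cases j <;>
      simp [triangleGraph, h1, h2, h3, h1.symm, h2.symm, h3.symm]

lemma aux_claw {V : Type} (G : SimpleGraph V) {a b c e : V} (h1 : G.Adj a b) (h2 : G.Adj a c)
    (h3 : G.Adj a e) (n1 : ¬ G.Adj b c) (n2 : ¬ G.Adj b e) (n3 : ¬ G.Adj c e)
    (d1 : b ≠ c) (d2 : b ≠ e) (d3 : c ≠ e) : ∃ f : clawGraph ↪g G, f 0 = a := by
  have n1' : ¬ G.Adj c b := fun h => n1 h.symm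
  have n2' : ¬ G.Adj e b := fun h => n2 h.symm
  have n3' : ¬ G.Adj e c := fun h => n3 h.symm
  refine ⟨⟨⟨![a, b, c, e], ?_⟩, ?_⟩, rfl⟩
  · intro i j hij
    fin_cases i <;> fin_cases j <;>
      simp_all [h1.ne, h2.ne, h3.ne, h1.ne', h2.ne', h3.ne', d1.symm, d2.symm, d3.symm]
  · intro i j
    change G.Adj (![a, b, c, e] i) (![a, b, c, e] j) ↔ _
    fin_cases i <;> fin_cases j <;>
      simp [clawGraph, h1, h2, h3, h1.symm, h2.symm, h3.symm, n1, n2, n3, n1', n2', n3']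

lemma aux_dist {V : Type} (G : SimpleGraph V) {P Q : Set V} {a b : V} (ha : a ∈ P) (hb : b ∈ Q) :
    eSetDist G P Q ≤ G.edist a b :=
  iInf₂_le_of_le a ha (iInf₂_le b hb)

lemma aux_cyc (k : ℕ) (hk : 4 ≤ k) (i : Fin k) : ∃ a b, a ≠ b ∧
    (SimpleGraph.cycleGraph k).Adj i a ∧ (SimpleGraph.cycleGraph k).Adj i b := by
  obtain ⟨m, rfl⟩ : ∃ m, k = m + 2 := ⟨k - 2, by omega⟩
  refine ⟨i + 1, i - 1, ?_, ?_, ?_⟩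
  · intro h
    have h2 : (1 : Fin (m+2)) + 1 = 0 := by
      have := congrArg (fun x => x - i + 1) h
      simpa using this
    have := congrArg Fin.val h2
    rw [Fin.val_add] at this
    simp at this
    rw [Nat.mod_eq_of_lt (by omega)] at this
    omega
  · rw [cycleGraph_adj]; right; simp
  · rw [cycleGraph_adj]; left; simp

/-- The combinatorial heart. -/
lemma aux_main {V : Type} (G : SimpleGraph V) (Q : Set V) (hQ : PITForbidden G Q) (y z : V)
    (hy : y ∈ Q) (hN : ∀ w ∈ Q, G.Adj y w → w = z)
    (hyt : ∀ f : triangleGraph ↪g G, y ∉ Set.range f)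
    (hyc : ∀ f : clawGraph ↪g G, y ∉ Set.range f)
    (hzt : ∀ f : triangleGraph ↪g G, z ∉ Set.range f) : False := by
  have ytri : ∀ b c, G.Adj y b → G.Adj y c → G.Adj b c → False := by
    intro b c h1 h2 h3
    obtain ⟨f, hf⟩ := aux_tri G h1 h2 h3
    exact hyt f ⟨0, hf⟩
  have ztri : ∀ b c, G.Adj z b → G.Adj z c → G.Adj b c → False := by
    intro b c h1 h2 h3
    obtain ⟨f, hf⟩ := aux_tri G h1 h2 h3
    exact hzt f ⟨0, hf⟩
  obtain ⟨hbad, hmin⟩ := hQ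
  rcases hbad with (⟨⟨φ⟩⟩ | ⟨⟨φ⟩⟩ | ⟨k, hk, ⟨φ⟩⟩) | ⟨hconn, ⟨f⟩, ⟨g⟩⟩
  · obtain ⟨i, hi⟩ := φ.surjective ⟨y, hy⟩
    have A : ∀ a b, netGraph.Adj a b → G.Adj (φ a).1 (φ b).1 := fun a b h => φ.map_rel_iff.2 h
    have T : ∀ a b c, i = a → netGraph.Adj a b → netGraph.Adj a c → netGraph.Adj b c → False := by
      rintro a b c rfl h1 h2 h3
      have e : (φ i).1 = y := by rw [hi]
      exact ytri _ _ (e ▸ A _ _ h1) (e ▸ A _ _ h2) (A _ _ h3)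
    have S : ∀ a a' b c, i = a → netGraph.Adj a a' → netGraph.Adj a' b → netGraph.Adj a' c →
        netGraph.Adj b c → False := by
      rintro a a' b c rfl h0 h1 h2 h3
      have e : (φ i).1 = y := by rw [hi]
      have e' : (φ a').1 = z := hN _ (φ a').2 (e ▸ A _ _ h0)
      exact ztri _ _ (e' ▸ A _ _ h1) (e' ▸ A _ _ h2) (A _ _ h3)
    have hcase : i = 0 ∨ i = 1 ∨ i = 2 ∨ i = 3 ∨ i = 4 ∨ i = 5 := by
      fin_cases i <;> simp
    rcases hcase with h | h | h | h | h | h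
    · exact T _ 1 2 h (by simp [netGraph]) (by simp [netGraph]) (by simp [netGraph])
    · exact T _ 0 2 h (by simp [netGraph]) (by simp [netGraph]) (by simp [netGraph])
    · exact T _ 0 1 h (by simp [netGraph]) (by simp [netGraph]) (by simp [netGraph])
    · exact S _ 0 1 2 h (by simp [netGraph]) (by simp [netGraph]) (by simp [netGraph])
        (by simp [netGraph])
    · exact S _ 1 0 2 h (by simp [netGraph]) (by simp [netGraph]) (by simp [netGraph])
        (by simp [netGraph])
    · exact S _ 2 0 1 h (by simp [netGraph]) (by simp [netGraph]) (by simp [netGraph])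
        (by simp [netGraph])
  · obtain ⟨i, hi⟩ := φ.surjective ⟨y, hy⟩
    have A : ∀ a b, sunGraph.Adj a b → G.Adj (φ a).1 (φ b).1 := fun a b h => φ.map_rel_iff.2 h
    have T : ∀ a b c, i = a → sunGraph.Adj a b → sunGraph.Adj a c → sunGraph.Adj b c → False := by
      rintro a b c rfl h1 h2 h3
      have e : (φ i).1 = y := by rw [hi]
      exact ytri _ _ (e ▸ A _ _ h1) (e ▸ A _ _ h2) (A _ _ h3)
    have hcase : i = 0 ∨ i = 1 ∨ i = 2 ∨ i = 3 ∨ i = 4 ∨ i = 5 := by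
      fin_cases i <;> simp
    rcases hcase with h | h | h | h | h | h
    · exact T _ 1 2 h (by simp [sunGraph]) (by simp [sunGraph]) (by simp [sunGraph])
    · exact T _ 0 2 h (by simp [sunGraph]) (by simp [sunGraph]) (by simp [sunGraph])
    · exact T _ 0 1 h (by simp [sunGraph]) (by simp [sunGraph]) (by simp [sunGraph])
    · exact T _ 0 1 h (by simp [sunGraph]) (by simp [sunGraph]) (by simp [sunGraph])
    · exact T _ 1 2 h (by simp [sunGraph]) (by simp [sunGraph]) (by simp [sunGraph])
    · exact T _ 2 0 h (by simp [sunGraph]) (by simp [sunGraph]) (by simp [sunGraph])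
  · obtain ⟨i, hi⟩ := φ.surjective ⟨y, hy⟩
    have e : (φ i).1 = y := by rw [hi]
    obtain ⟨a, b, hab, h1, h2⟩ := aux_cyc k hk i
    have h1' : G.Adj (φ i).1 (φ a).1 := φ.map_rel_iff.2 h1
    have h2' : G.Adj (φ i).1 (φ b).1 := φ.map_rel_iff.2 h2
    rw [e] at h1' h2'
    apply hab
    apply φ.injective
    apply Subtype.ext
    rw [hN _ (φ a).2 h1', hN _ (φ b).2 h2']
  · have hf : ∀ i, (f i).1 ≠ y := fun i h =>
      hyc ((Embedding.induce Q).comp f) ⟨i, h⟩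
    have hg : ∀ i, (g i).1 ≠ y := fun i h =>
      hyt ((Embedding.induce Q).comp g) ⟨i, h⟩
    apply hmin (Q \ {y}) ⟨Set.diff_subset, fun h => (h hy).2 rfl⟩
    right
    refine ⟨?_, ⟨⟨⟨fun i => ⟨(f i).1, (f i).2, hf i⟩, ?_⟩, ?_⟩⟩,
      ⟨⟨⟨fun i => ⟨(g i).1, (g i).2, hg i⟩, ?_⟩, ?_⟩⟩⟩
    · have hpre := hconn.preconnected.induce_of_degree_eq_one (s := {x : Q | x.1 ≠ y}) (by
        rintro ⟨w, hw⟩ hwy a ha b hb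
        have hwy' : w = y := by simpa using hwy
        subst hwy'
        exact Subtype.ext ((hN _ a.2 ha).trans (hN _ b.2 hb).symm))
      have : Nonempty ↑(Q \ {y}) := ⟨⟨(f 0).1, (f 0).2, hf 0⟩⟩
      refine ⟨?_⟩
      rintro ⟨a, ha, ha'⟩ ⟨b, hb, hb'⟩
      let F : ((G.induce Q).induce {x : Q | x.1 ≠ y}) →g G.induce (Q \ {y}) :=
        ⟨fun x => ⟨x.1.1, x.1.2, x.2⟩, fun h => h⟩
      exact (hpre ⟨⟨a, ha⟩, ha'⟩ ⟨⟨b, hb⟩, hb'⟩).map F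
    · intro i j hij
      exact f.injective (Subtype.ext (congrArg (fun x => x.1) hij))
    · intro i j
      exact f.map_rel_iff
    · intro i j hij
      exact g.injective (Subtype.ext (congrArg (fun x => x.1) hij))
    · intro i j
      exact g.map_rel_iff

theorem stmt14 {V : Type} [Fintype V] (G : SimpleGraph V) (Js Ts : Set V)
    (hJ : Nonempty (clawGraph ≃g G.induce Js))
    (hT : Nonempty (triangleGraph ≃g G.induce Ts))
    (d : ℕ) (hd : eSetDist G Js Ts = (d : ℕ∞)) (hd2 : 2 ≤ d)
    (hclosest : ∀ J T : Set V, Nonempty (clawGraph ≃g G.induce J) →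
      Nonempty (triangleGraph ≃g G.induce T) → eSetDist G J T < ⊤ →
      (d : ℕ∞) ≤ eSetDist G J T)
    (u v : V) (hu : u ∈ Js) (hv : v ∈ Ts)
    (p : G.Walk u v) (hp : p.IsPath) (hlen : p.length = d)
    (Q : Set V) (hQ : PITForbidden G Q)
    (hmeet : ∃ i, 1 ≤ i ∧ i ≤ d - 1 ∧ p.getVert i ∈ Q) :
    v ∈ Q := by
  by_contra hvQ
  have ht : ∀ i < d, ∀ f : triangleGraph ↪g G, p.getVert i ∉ Set.range f := by
    intro i hi f hf
    have h1 : eSetDist G Js (Set.range f) ≤ (i : ℕ∞) := by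
      refine (aux_dist G hu hf).trans ((p.take i).edist_le.trans ?_)
      rw [Walk.take_length]
      exact_mod_cast min_le_left _ _
    have h2 := hclosest Js _ hJ ⟨f.isoInduceRange⟩ (h1.trans_lt (ENat.coe_lt_top i))
    have : d ≤ i := by exact_mod_cast h2.trans h1
    omega
  have hc : ∀ i, 1 ≤ i → ∀ f : clawGraph ↪g G, p.getVert i ∉ Set.range f := by
    intro i hi f hf
    have h1 : eSetDist G (Set.range f) Ts ≤ ((d - i : ℕ) : ℕ∞) := by
      refine (aux_dist G hf hv).trans ((p.drop i).edist_le.trans ?_)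
      rw [Walk.drop_length, hlen]
    have h2 := hclosest _ Ts ⟨f.isoInduceRange⟩ hT (h1.trans_lt (ENat.coe_lt_top _))
    have : d ≤ d - i := by exact_mod_cast h2.trans h1
    omega
  obtain ⟨j, hj1, hjd, hjQ, hjn⟩ : ∃ j, 1 ≤ j ∧ j < d ∧ p.getVert j ∈ Q ∧
      p.getVert (j + 1) ∉ Q := by
    by_contra hno
    push Not at hno
    obtain ⟨i, hi1, hi2, hiQ⟩ := hmeet
    have key : ∀ n, i + n ≤ d → p.getVert (i + n) ∈ Q := by
      intro n
      induction n with
      | zero => intro _; exact hiQ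
      | succ n ih => intro h; exact hno (i + n) (by omega) (by omega) (ih (by omega))
    have := key (d - i) (by omega)
    rw [show i + (d - i) = p.length by omega, Walk.getVert_length] at this
    exact hvQ this
  have a1 : G.Adj (p.getVert j) (p.getVert (j + 1)) := p.adj_getVert_succ (by omega)
  have a0 : G.Adj (p.getVert j) (p.getVert (j - 1)) := by
    have := p.adj_getVert_succ (i := j - 1) (by omega)
    rw [show j - 1 + 1 = j by omega] at this
    exact this.symm
  have hne : p.getVert (j - 1) ≠ p.getVert (j + 1) := by
    intro h
    have := hp.getVert_injOn (by simp; omega) (by simp; omega) h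
    omega
  refine aux_main G Q hQ (p.getVert j) (p.getVert (j - 1)) hjQ ?_ (ht j hjd) (hc j hj1)
    (ht _ (by omega))
  intro w hw haw
  by_contra hwz
  have hw1 : w ≠ p.getVert (j + 1) := fun h => hjn (h ▸ hw)
  have nt : ∀ b c, G.Adj (p.getVert j) b → G.Adj (p.getVert j) c → ¬ G.Adj b c := by
    intro b c h1 h2 h3
    obtain ⟨f, hf⟩ := aux_tri G h1 h2 h3
    exact ht j hjd f ⟨0, hf⟩
  obtain ⟨f, hf⟩ := aux_claw G haw a0 a1 (nt _ _ haw a0) (nt _ _ haw a1) (nt _ _ a0 a1) hwz hw1 hne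
  exact hc j hj1 f ⟨0, hf⟩
end

section
/- Let G be a graph containing no induced cycle C_j for any 5 ≤ j ≤ 10. Let J* ⊆ V(G) with G[J*] isomorphic to the long-claw or to the triangle K_3, and T* ⊆ V(G) with G[T*] isomorphic to the 4-cycle C_4, such that d := d_G(J*,T*) is finite and (J*,T*) is a closest such pair: for all J, T ⊆ V(G) with G[J] isomorphic to the long-claw or to K_3, G[T] isomorphic to C_4, and d_G(J,T) finite, one has d ≤ d_G(J,T). Assume d ≥ 2 and let P* = x_0 x_1 ⋯ x_d be a shortest path in G with x_0 = u ∈ J* and x_d = v ∈ T*. Let C be the connected component of G − (J* ∪ T*) containing x_1. Then: (a) {x_1,…,x_{d−1}} ⊆ V(C), and every vertex of V(C) \ {x_1,…,x_{d−1}} has exactly one neighbor in G, and that neighbor belongs to {x_1,…,x_{d−1}} (so C is a caterpillar with spine x_1 ⋯ x_{d−1}); (b) the only edges of G between V(C) and J* ∪ T* are {u, x_1} and {x_{d−1}, v}. -/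
open SimpleGraph

namespace S15

def res {V : Type} (G : SimpleGraph V) (S : Set V) : SimpleGraph V where
  Adj a b := G.Adj a b ∧ a ∈ S ∧ b ∈ S
  symm := ⟨fun a b h => ⟨h.1.symm, h.2.2, h.2.1⟩⟩
  loopless := ⟨fun a h => G.loopless.irrefl a h.1⟩

def W {V : Type} (G : SimpleGraph V) (n : ℕ) (a b : V) : Prop :=
  ∃ q : G.Walk a b, q.length ≤ n

theorem W.refl {V : Type} (G : SimpleGraph V) (n : ℕ) (a : V) : W G n a a := ⟨.nil, by simp⟩

theorem W.trans {V : Type} {G : SimpleGraph V} {n m : ℕ} {a b c : V}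
    (h : W G n a b) (h' : W G m b c) : W G (n + m) a c := by
  obtain ⟨q, hq⟩ := h
  obtain ⟨r, hr⟩ := h'
  exact ⟨q.append r, by rw [Walk.length_append]; omega⟩

theorem W.symm {V : Type} {G : SimpleGraph V} {n : ℕ} {a b : V}
    (h : W G n a b) : W G n b a := by
  obtain ⟨q, hq⟩ := h
  exact ⟨q.reverse, by simpa using hq⟩

theorem W.mono {V : Type} {G : SimpleGraph V} {n m : ℕ} {a b : V}
    (h : W G n a b) (hm : n ≤ m) : W G m a b := by
  obtain ⟨q, hq⟩ := h
  exact ⟨q, by omega⟩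

theorem W.adj {V : Type} {G : SimpleGraph V} {a b : V}
    (h : G.Adj a b) : W G 1 a b := ⟨.cons h .nil, by simp⟩

theorem W.le {V : Type} {G H : SimpleGraph V} {n : ℕ} {a b : V}
    (h : W G n a b) (hm : G ≤ H) : W H n a b := by
  obtain ⟨q, hq⟩ := h
  exact ⟨q.mapLe hm, by simpa using hq⟩

theorem res_le {V : Type} (G : SimpleGraph V) {S T : Set V} (h : S ⊆ T) : res G S ≤ res G T :=
  fun _ _ h' => ⟨h'.1, h h'.2.1, h h'.2.2⟩

theorem cyc_adj (n : ℕ) (h5 : 5 ≤ n) (h10 : n ≤ 10) (a b : Fin n) :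
    (cycleGraph n).Adj a b ↔ (a.val + 1 = b.val ∨ b.val + 1 = a.val ∨
      (a.val = 0 ∧ b.val + 1 = n) ∨ (b.val = 0 ∧ a.val + 1 = n)) := by
  rw [cycleGraph_adj', Fin.sub_def, Fin.sub_def]
  have ha := a.isLt
  have hb := b.isLt
  dsimp only
  interval_cases n <;> omega

theorem keyB {V : Type} (G : SimpleGraph V)
    (hC : ∀ j, 5 ≤ j → j ≤ 10 → ¬ ContainsInduced G (SimpleGraph.cycleGraph j))
    (S : Set V) (z q0 y : V) (hz : z ∉ S) (hq0 : q0 ∈ S) (hy : y ∈ S) (hne : y ≠ q0)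
    (hzq : G.Adj z q0) (hzy : G.Adj z y) (hw : W (res G S) 8 q0 y)
    (noTri : ∀ m ∈ S, G.Adj q0 m → G.Adj z m → False)
    (noC4 : ∀ m ∈ S, ∀ t ∈ S, G.Adj q0 m → ¬ G.Adj z m → G.Adj m t → G.Adj t z →
      ¬ G.Adj q0 t → t ≠ q0 → False) : False := by
  classical
  have hex : ∃ n, ∃ y, y ∈ S ∧ y ≠ q0 ∧ G.Adj z y ∧ (res G S).Reachable q0 y ∧
      (res G S).dist q0 y = n := by
    obtain ⟨q, hq⟩ := hw
    exact ⟨_, y, hy, hne, hzy, q.reachable, rfl⟩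
  have hn8 : Nat.find hex ≤ 8 := by
    obtain ⟨q, hq⟩ := hw
    refine le_trans (Nat.find_min' hex ⟨y, hy, hne, hzy, q.reachable, rfl⟩) ?_
    exact le_trans (dist_le q) hq
  have hmin : ∀ t, t ∈ S → t ≠ q0 → G.Adj z t → (res G S).Reachable q0 t →
      Nat.find hex ≤ (res G S).dist q0 t := fun t h1 h2 h3 h4 =>
    Nat.find_min' hex ⟨t, h1, h2, h3, h4, rfl⟩
  obtain ⟨t, htS, htq, hzt, hr, hdt⟩ := Nat.find_spec hex
  generalize Nat.find hex = n at *
  obtain ⟨q, hq⟩ := hr.exists_walk_length_eq_dist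
  have hql : q.length = n := by rw [hq, hdt]
  have hadj : ∀ i < n, (res G S).Adj (q.getVert i) (q.getVert (i+1)) := fun i hi =>
    q.adj_getVert_succ (by omega)
  have hreach : ∀ i, (res G S).Reachable q0 (q.getVert i) := fun i => (q.take i).reachable
  have hdist : ∀ i ≤ n, (res G S).dist q0 (q.getVert i) = i := by
    intro i hi
    have h1 : (res G S).dist q0 (q.getVert i) ≤ i := by
      refine le_trans (dist_le (q.take i)) ?_
      rw [Walk.take_length]; omega
    have h2 : n ≤ (res G S).dist q0 (q.getVert i) + (n - i) := by
      obtain ⟨r, hr'⟩ := (hreach i).exists_walk_length_eq_dist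
      have := dist_le (r.append (q.drop i))
      rw [hdt, Walk.length_append, Walk.drop_length] at this
      omega
    omega
  have hn1 : 1 ≤ n := by
    by_contra h
    have : n = 0 := by omega
    rw [this] at hdt
    exact htq ((hr.dist_eq_zero_iff.1 hdt).symm)
  have hf0 : q.getVert 0 = q0 := q.getVert_zero
  have hfn : q.getVert n = t := by rw [← hql]; exact q.getVert_length
  have hS : ∀ i ≤ n, q.getVert i ∈ S := by
    intro i hi
    rcases Nat.lt_or_ge i n with h | h
    · exact (hadj i h).2.1
    · rw [show i = n by omega, hfn]; exact htS
  have hz' : ∀ i, 1 ≤ i → i < n → ¬ G.Adj z (q.getVert i) := by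
    intro i h1 h2 h3
    have := hmin _ (hS i (by omega)) ?_ h3 (hreach i)
    · rw [hdist i (by omega)] at this; omega
    · intro h
      have := hdist i (by omega)
      rw [h] at this; simp at this; omega
  have hch : ∀ i j, i ≤ n → j ≤ n → G.Adj (q.getVert i) (q.getVert j) → j ≤ i + 1 := by
    intro i j hi hj h
    obtain ⟨r, hr'⟩ := (hreach i).exists_walk_length_eq_dist
    have hh : (res G S).Adj (q.getVert i) (q.getVert j) := ⟨h, hS i hi, hS j hj⟩
    have := dist_le (r.append (Walk.cons hh .nil))
    rw [hdist j hj, Walk.length_append, hr', hdist i hi] at this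
    simpa using this
  have hinj : ∀ i j, i ≤ n → j ≤ n → q.getVert i = q.getVert j → i = j := by
    intro i j hi hj h
    rw [← hdist i hi, ← hdist j hj, h]
  rcases Nat.lt_or_ge n 2 with h2 | h2
  · have : n = 1 := by omega
    subst this
    have := hadj 0 (by omega)
    rw [hf0, zero_add, hfn] at this
    exact noTri t htS this.1 hzt
  rcases Nat.lt_or_ge n 3 with h3 | h3
  · have : n = 2 := by omega
    subst this
    have a1 := hadj 0 (by omega)
    have a2 := hadj 1 (by omega)
    rw [hf0, zero_add] at a1
    rw [show 1 + 1 = 2 by rfl, hfn] at a2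
    refine noC4 _ (hS 1 (by omega)) t htS a1.1 (hz' 1 (by omega) (by omega)) a2.1 hzt.symm ?_ htq
    intro h
    have := hch 0 2 (by omega) (by omega) (by rw [hf0, hfn]; exact h)
    omega
  · refine hC (n+2) (by omega) (by omega) ⟨?_⟩
    let g : Fin (n+2) → V := fun i => if i.val = 0 then z else q.getVert (i.val - 1)
    refine ⟨⟨g, ?_⟩, ?_⟩
    · intro a b hab
      have ha := a.isLt
      have hb := b.isLt
      simp only [g] at hab
      ext
      split_ifs at hab with h1 h2 h2
      · omega
      · exact absurd (hS _ (by omega)) (hab ▸ hz)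
      · exact absurd (hS (a.val - 1) (by omega)) (hab ▸ hz)
      · have := hinj _ _ (by omega) (by omega) hab
        omega
    · intro a b
      have ha := a.isLt
      have hb := b.isLt
      rw [cyc_adj _ (by omega) (by omega)]
      have hzz : ∀ i, i ≤ n → (G.Adj z (q.getVert i) ↔ i = 0 ∨ i = n) := by
        intro i hi
        constructor
        · intro h
          by_contra h'
          exact hz' i (by omega) (by omega) h
        · rintro (h | h)
          · rw [h, hf0]; exact hzq
          · rw [h, hfn]; exact hzt
      have hxx : ∀ i j, i ≤ n → j ≤ n →
          (G.Adj (q.getVert i) (q.getVert j) ↔ i + 1 = j ∨ j + 1 = i) := by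
        intro i j hi hj
        constructor
        · intro h
          have h1 := hch i j hi hj h
          have h2 := hch j i hj hi h.symm
          have h3 : i ≠ j := by rintro rfl; exact G.loopless.irrefl _ h
          omega
        · rintro (h | h)
          · subst h; exact (hadj i (by omega)).1
          · subst h; exact (hadj j (by omega)).1.symm
      change G.Adj (g a) (g b) ↔ _
      simp only [g]
      split_ifs with h1 h2 h2
      · simp; omega
      · rw [hzz _ (by omega)]; omega
      · rw [G.adj_comm, hzz _ (by omega)]; omega
      · rw [hxx _ _ (by omega) (by omega)]; omega


structure Cfg {V : Type} (G : SimpleGraph V) (J T : Set V) (d : ℕ) (x : ℕ → V) : Prop where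
  hC : ∀ j, 5 ≤ j → j ≤ 10 → ¬ ContainsInduced G (SimpleGraph.cycleGraph j)
  hd : 2 ≤ d
  adj : ∀ i < d, G.Adj (x i) (x (i+1))
  x0 : x 0 ∈ J
  xd : x d ∈ T
  dist : ∀ s ∈ J, ∀ t ∈ T, ∀ n, W G n s t → d ≤ n
  Jch : ∀ a ∈ J, ∀ b ∈ J, W (res G J) 4 a b
  Tch : ∀ a ∈ T, ∀ b ∈ T, W (res G T) 4 a b
  Jn : ∀ a ∈ J, ∃ b ∈ J, G.Adj a b
  Tn : ∀ a ∈ T, ∃ b ∈ T, G.Adj a b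
  tri : ∀ a b c, G.Adj a b → G.Adj b c → G.Adj a c → ∀ t ∈ T, ∀ n, W G n a t → d ≤ n
  c4 : ∀ a b c e, G.Adj a b → G.Adj b c → G.Adj c e → G.Adj e a → ¬ G.Adj a c → ¬ G.Adj b e →
    a ≠ c → b ≠ e → ∀ s ∈ J, ∀ n, W G n a s → d ≤ n
  lc : ∀ f : Fin 7 → V, (∀ i j, G.Adj (f i) (f j) ↔ longClawGraph.Adj i j) →
    ∀ t ∈ T, ∀ n, W G n (f 0) t → d ≤ n

def Sp (d : ℕ) {V : Type} (x : ℕ → V) : Set V := {w : V | ∃ i, 1 ≤ i ∧ i ≤ d - 1 ∧ w = x i}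

section
variable {V : Type} {G : SimpleGraph V} {J T : Set V} {d : ℕ} {x : ℕ → V}

theorem res_le_self (S : Set V) : res G S ≤ G := fun _ _ h => h.1

theorem Cfg.memS (h : Cfg G J T d x) (i : ℕ) (hi : i ≤ d) : x i ∈ J ∪ T ∪ Sp d x := by
  rcases Nat.eq_zero_or_pos i with h0 | h0
  · subst h0; exact Or.inl (Or.inl h.x0)
  rcases Nat.lt_or_ge i d with h1 | h1
  · exact Or.inr ⟨i, h0, by omega, rfl⟩
  · rw [show i = d by omega]; exact Or.inl (Or.inr h.xd)

theorem Cfg.xch (h : Cfg G J T d x) (i k : ℕ) (hi : i + k ≤ d) :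
    W (res G (J ∪ T ∪ Sp d x)) k (x i) (x (i + k)) := by
  induction k with
  | zero => exact W.refl _ _ _
  | succ k ih =>
    exact (ih (by omega)).trans (W.adj ⟨h.adj (i+k) (by omega), h.memS _ (by omega),
      h.memS _ (by omega)⟩)

theorem Cfg.gch (h : Cfg G J T d x) (i k : ℕ) (hi : i + k ≤ d) : W G k (x i) (x (i + k)) :=
  (h.xch i k hi).le (res_le_self _)

theorem Cfg.toT (h : Cfg G J T d x) (i : ℕ) (hi : i ≤ d) : W G (d - i) (x i) (x d) := by
  have := h.gch i (d - i) (by omega)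
  rwa [show i + (d - i) = d by omega] at this

theorem Cfg.toJ (h : Cfg G J T d x) (i : ℕ) (hi : i ≤ d) : W G i (x i) (x 0) := by
  have := h.gch 0 i (by omega)
  rw [zero_add] at this
  exact this.symm

/-- walks between `J` side and `T` side give lower bounds. -/
theorem Cfg.lowJ (h : Cfg G J T d x) {n i : ℕ} {s : V} (hs : s ∈ J) (hi : i ≤ d)
    (hw : W G n s (x i)) : i ≤ n := by
  have := h.dist s hs _ h.xd _ (hw.trans (h.toT i hi))
  omega

theorem Cfg.lowT (h : Cfg G J T d x) {n i : ℕ} {t : V} (ht : t ∈ T) (hi : i ≤ d)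
    (hw : W G n (x i) t) : d ≤ n + i := by
  have := h.dist _ h.x0 t ht _ ((h.toJ i hi).symm.trans hw)
  omega

theorem Cfg.lowX (h : Cfg G J T d x) {n i j : ℕ} (hi : i ≤ d) (hj : j ≤ d)
    (hw : W G n (x i) (x j)) : j ≤ n + i := by
  have := h.lowJ h.x0 hj ((h.toJ i hi).symm.trans hw)
  omega

theorem Cfg.noTri (h : Cfg G J T d x) {a b c : V} (ha : a ∈ Sp d x) (h1 : G.Adj a b)
    (h2 : G.Adj b c) (h3 : G.Adj a c) : False := by
  obtain ⟨i, hi, hi', rfl⟩ := ha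
  have := h.tri _ _ _ h1 h2 h3 _ h.xd _ (h.toT i (by omega))
  have := h.hd
  omega

theorem Cfg.noC4 (h : Cfg G J T d x) {a b c e : V} (ha : a ∈ Sp d x) (h1 : G.Adj a b)
    (h2 : G.Adj b c) (h3 : G.Adj c e) (h4 : G.Adj e a) (h5 : ¬ G.Adj a c) (h6 : ¬ G.Adj b e)
    (h7 : a ≠ c) (h8 : b ≠ e) : False := by
  obtain ⟨i, hi, hi', rfl⟩ := ha
  have := h.c4 _ _ _ _ h1 h2 h3 h4 h5 h6 h7 h8 _ h.x0 _ (h.toJ i (by omega))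
  have := h.hd
  omega

theorem Cfg.keyB (h : Cfg G J T d x)
    (S : Set V) (z q0 y : V) (hz : z ∉ S) (hq0 : q0 ∈ S) (hy : y ∈ S) (hne : y ≠ q0)
    (hzq : G.Adj z q0) (hzy : G.Adj z y) (hw : W (res G S) 8 q0 y)
    (hgood : ∀ m ∈ S, G.Adj q0 m → z ∈ Sp d x ∨ q0 ∈ Sp d x ∨ m ∈ Sp d x) : False := by
  refine S15.keyB G h.hC S z q0 y hz hq0 hy hne hzq hzy hw ?_ ?_
  · intro m hm h1 h2
    rcases hgood m hm h1 with h' | h' | h'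
    · exact h.noTri h' hzq h1 h2
    · exact h.noTri h' hzq.symm h2 h1
    · exact h.noTri h' h1.symm hzq.symm h2.symm
  · intro m hm t ht h1 h2 h3 h4 h5 h6
    have hmz : m ≠ z := fun e => hz (e ▸ hm)
    have h2' : ¬ G.Adj m z := fun e => h2 e.symm
    have h5' : ¬ G.Adj t q0 := fun e => h5 e.symm
    rcases hgood m hm h1 with h' | h' | h'
    · exact h.noC4 h' hzq h1 h3 h4 h2 h5 hmz.symm h6.symm
    · exact h.noC4 h' h1 h3 h4 hzq h5 h2' h6.symm hmz
    · exact h.noC4 h' h3 h4 hzq h1 h2' h5' hmz h6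

theorem Cfg.spJ (h : Cfg G J T d x) (i : ℕ) (hi : 1 ≤ i) (hi' : i ≤ d - 1) : x i ∉ J := by
  intro hh
  have := h.hd
  have := h.lowJ hh (i := i) (by omega) (W.refl G 0 _)
  omega

theorem Cfg.spT (h : Cfg G J T d x) (i : ℕ) (hi : 1 ≤ i) (hi' : i ≤ d - 1) : x i ∉ T := by
  intro hh
  have := h.hd
  have := h.lowT hh (i := i) (by omega) (W.refl G 0 _)
  omega

theorem Cfg.claim1 (h : Cfg G J T d x) (i : ℕ) (hi : 1 ≤ i) (hi' : i ≤ d - 1) (y : V)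
    (hy : y ∈ J) (hxy : G.Adj (x i) y) : i = 1 ∧ y = x 0 := by
  have := h.hd
  have := h.lowJ hy (i := i) (by omega) (W.adj hxy.symm)
  have hi1 : i = 1 := by omega
  subst hi1
  refine ⟨rfl, ?_⟩
  by_contra hne
  exact h.keyB J (x 1) (x 0) y (h.spJ 1 le_rfl hi') h.x0 hy hne (h.adj 0 (by omega)).symm hxy
    ((h.Jch _ h.x0 _ hy).mono (by omega)) (fun m _ _ => Or.inl ⟨1, le_rfl, hi', rfl⟩)

theorem Cfg.claim2 (h : Cfg G J T d x) (i : ℕ) (hi : 1 ≤ i) (hi' : i ≤ d - 1) (y : V)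
    (hy : y ∈ T) (hxy : G.Adj (x i) y) : i = d - 1 ∧ y = x d := by
  have := h.hd
  have := h.lowT hy (i := i) (by omega) (W.adj hxy)
  have hi1 : i = d - 1 := by omega
  refine ⟨hi1, ?_⟩
  by_contra hne
  have ha := h.adj i (by omega)
  rw [show i + 1 = d by omega] at ha
  exact h.keyB T (x i) (x d) y (h.spT i hi hi') h.xd hy hne ha hxy
    ((h.Tch _ h.xd _ hy).mono (by omega)) (fun m _ _ => Or.inl ⟨i, hi, hi', rfl⟩)

/-- If `y` in the configuration is within `k ≤ 3` of `x i` in `G`, the restricted distance is at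
most `k + 4`. -/
theorem Cfg.bound (h : Cfg G J T d x) (i k : ℕ) (hi : 1 ≤ i) (hi' : i ≤ d - 1) (y : V)
    (hy : y ∈ J ∪ T ∪ Sp d x) (hw : W G k (x i) y) :
    W (res G (J ∪ T ∪ Sp d x)) (k + 4) (x i) y := by
  have := h.hd
  rcases hy with (hy | hy) | ⟨j, hj, hj', rfl⟩
  · have h1 := h.lowJ hy (i := i) (by omega) hw.symm
    have h2 := h.xch 0 i (by omega)
    rw [zero_add] at h2
    exact (h2.symm.trans ((h.Jch _ h.x0 _ hy).le (res_le _ (fun a ha => Or.inl (Or.inl ha))))).mono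
      (by omega)
  · have h1 := h.lowT hy (i := i) (by omega) hw
    have h2 := h.xch i (d - i) (by omega)
    rw [show i + (d - i) = d by omega] at h2
    exact (h2.trans ((h.Tch _ h.xd _ hy).le (res_le _ (fun a ha => Or.inl (Or.inr ha))))).mono
      (by omega)
  · have h1 := h.lowX (by omega) (by omega) hw
    have h2 := h.lowX (by omega) (by omega) hw.symm
    rcases le_total i j with hij | hij
    · have h3 := h.xch i (j - i) (by omega)
      rw [show i + (j - i) = j by omega] at h3
      exact h3.mono (by omega)
    · have h3 := h.xch j (i - j) (by omega)
      rw [show j + (i - j) = i by omega] at h3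
      exact h3.symm.mono (by omega)

theorem Cfg.claim3 (h : Cfg G J T d x) (i : ℕ) (hi : 1 ≤ i) (hi' : i ≤ d - 1) (w y : V)
    (hwS : w ∉ J ∪ T ∪ Sp d x) (hwx : G.Adj w (x i)) (hy : y ∈ J ∪ T ∪ Sp d x)
    (hwy : G.Adj w y) : y = x i := by
  by_contra hne
  have hb := h.bound i 2 hi hi' y hy ((W.adj hwx.symm).trans (W.adj hwy))
  exact h.keyB _ w (x i) y hwS (Or.inr ⟨i, hi, hi', rfl⟩) hy hne hwx hwy (hb.mono (by omega))
    (fun _ _ _ => Or.inr (Or.inl ⟨i, hi, hi', rfl⟩))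

theorem Cfg.claim4 (h : Cfg G J T d x) (i : ℕ) (hi : 1 ≤ i) (hi' : i ≤ d - 1) (w y t : V)
    (hwS : w ∉ J ∪ T ∪ Sp d x) (hwx : G.Adj w (x i)) (hy : y ∉ J ∪ T ∪ Sp d x)
    (hwy : G.Adj w y) (ht : t ∈ J ∪ T ∪ Sp d x) : ¬ G.Adj y t := by
  intro hyt
  have hb := h.bound i 3 hi hi' t ht
    (((W.adj hwx.symm).trans (W.adj hwy)).trans (W.adj hyt))
  have hb' : W (res G (insert w (J ∪ T ∪ Sp d x))) 8 w t := by
    have h1 : W (res G (insert w (J ∪ T ∪ Sp d x))) 1 w (x i) :=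
      W.adj ⟨hwx, Or.inl rfl, Or.inr (Or.inr ⟨i, hi, hi', rfl⟩)⟩
    exact h1.trans (hb.le (res_le _ (Set.subset_insert _ _)))
  refine h.keyB _ y w t ?_ (Or.inl rfl) (Or.inr ht) ?_ hwy.symm hyt hb' ?_
  · rintro (rfl | h')
    · exact G.loopless.irrefl _ hwy
    · exact hy h'
  · rintro rfl; exact hwS ht
  · rintro m (rfl | hm) hwm
    · exact absurd hwm (G.loopless.irrefl _)
    · right; right
      rw [h.claim3 i hi hi' w m hwS hwx hm hwm]
      exact ⟨i, hi, hi', rfl⟩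

theorem lcAdj (i j : Fin 7) : longClawGraph.Adj i j ↔
    ((i = 0 ∧ j = 1) ∨ (i = 0 ∧ j = 2) ∨ (i = 0 ∧ j = 3) ∨ (i = 1 ∧ j = 4) ∨ (i = 2 ∧ j = 5) ∨
     (i = 3 ∧ j = 6) ∨ (j = 0 ∧ i = 1) ∨ (j = 0 ∧ i = 2) ∨ (j = 0 ∧ i = 3) ∨ (j = 1 ∧ i = 4) ∨
     (j = 2 ∧ i = 5) ∨ (j = 3 ∧ i = 6)) := by
  simp only [longClawGraph, fromEdgeSet_adj, Set.mem_insert_iff, Set.mem_singleton_iff]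
  revert i j
  decide

theorem Cfg.claim5 (h : Cfg G J T d x) (i : ℕ) (hi : 1 ≤ i) (hi' : i ≤ d - 1) (w y : V)
    (hwS : w ∉ J ∪ T ∪ Sp d x) (hwx : G.Adj w (x i)) (hy : y ∉ J ∪ T ∪ Sp d x)
    (hwy : G.Adj w y) : False := by
  have hd := h.hd
  obtain ⟨u', hu', huu⟩ := h.Jn _ h.x0
  obtain ⟨v', hv', hvv⟩ := h.Tn _ h.xd
  obtain ⟨z, hz⟩ : ∃ z : ℕ → V, z = fun k => if k = 0 then u' else if k = d + 2 then v'
    else x (k - 1) := ⟨_, rfl⟩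
  have z0 : z 0 = u' := by simp [hz]
  have zd : z (d + 2) = v' := by simp [hz]
  have zx : ∀ k, k ≤ d → z (k + 1) = x k := by
    intro k hk
    simp [hz]; omega
  have zS : ∀ k, k ≤ d + 2 → z k ∈ J ∪ T ∪ Sp d x := by
    intro k hk
    rcases Nat.eq_zero_or_pos k with h0 | h0
    · rw [h0, z0]; exact Or.inl (Or.inl hu')
    rcases Nat.lt_or_ge k (d+2) with h1 | h1
    · rw [show k = k - 1 + 1 by omega, zx _ (by omega)]; exact h.memS _ (by omega)
    · rw [show k = d + 2 by omega, zd]; exact Or.inl (Or.inr hv')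
  have zadj : ∀ k, k ≤ d + 1 → G.Adj (z k) (z (k+1)) := by
    intro k hk
    rcases Nat.eq_zero_or_pos k with h0 | h0
    · rw [h0, z0, zx 0 (by omega)]; exact huu.symm
    rcases Nat.lt_or_ge k (d+1) with h1 | h1
    · have := h.adj (k-1) (by omega)
      rw [← zx _ (by omega), ← zx _ (by omega)] at this
      rwa [show k - 1 + 1 = k by omega] at this
    · rw [show k = d + 1 by omega, zd, zx d le_rfl]; exact hvv
  have zn : ∀ k l, k + 1 < l → l ≤ d + 2 → ¬ G.Adj (z k) (z l) := by
    intro k l hkl hl ha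
    rcases Nat.eq_zero_or_pos k with h0 | h0
    · rw [h0, z0] at ha
      rcases Nat.lt_or_ge l (d+2) with h1 | h1
      · rw [show l = l - 1 + 1 by omega, zx _ (by omega)] at ha
        rcases Nat.lt_or_ge (l-1) d with h2 | h2
        · have := h.claim1 (l-1) (by omega) (by omega) u' hu' ha.symm
          rw [this.2] at huu
          exact G.loopless.irrefl _ huu
        · rw [show l - 1 = d by omega] at ha
          have := h.dist _ hu' _ h.xd _ (W.adj ha)
          omega
      · rw [show l = d + 2 by omega, zd] at ha
        have := h.dist _ hu' _ hv' _ (W.adj ha)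
        omega
    · rw [show k = k - 1 + 1 by omega, zx _ (by omega)] at ha
      rcases Nat.lt_or_ge l (d+2) with h1 | h1
      · rw [show l = l - 1 + 1 by omega, zx _ (by omega)] at ha
        have := h.lowX (by omega) (by omega) (W.adj ha)
        omega
      · rw [show l = d + 2 by omega, zd] at ha
        rcases Nat.lt_or_ge 1 k with h2 | h2
        · have := h.claim2 (k-1) (by omega) (by omega) v' hv' ha
          rw [this.2] at hvv
          exact G.loopless.irrefl _ hvv
        · rw [show k - 1 = 0 by omega] at ha
          have := h.dist _ h.x0 _ hv' _ (W.adj ha)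
          omega
  have zw : ∀ k, k ≤ d + 2 → k ≠ i + 1 → ¬ G.Adj (z k) w := by
    intro k hk hki ha
    have e := h.claim3 i hi hi' w _ hwS hwx (zS k hk) ha.symm
    rw [← zx i (by omega)] at e
    rcases Nat.lt_or_ge k (i+1) with h1 | h1
    · have := zadj (i+1) (by omega)
      rw [← e] at this
      exact zn k (i+2) (by omega) (by omega) this
    · have := zadj i (by omega)
      rw [← e] at this
      exact zn i k (by omega) (by omega) this
  have zy : ∀ k, k ≤ d + 2 → ¬ G.Adj (z k) y := fun k hk ha =>
    h.claim4 i hi hi' w y _ hwS hwx hy hwy (zS k hk) ha.symm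
  obtain ⟨j, rfl⟩ : ∃ j, i = j + 1 := ⟨i - 1, by omega⟩
  -- path vertices
  have a01 := zadj j (by omega)
  have a12 := zadj (j+1) (by omega)
  have a23 := zadj (j+2) (by omega)
  have a34 := zadj (j+3) (by omega)
  have n02 := zn j (j+2) (by omega) (by omega)
  have n03 := zn j (j+3) (by omega) (by omega)
  have n04 := zn j (j+4) (by omega) (by omega)
  have n13 := zn (j+1) (j+3) (by omega) (by omega)
  have n14 := zn (j+1) (j+4) (by omega) (by omega)
  have n24 := zn (j+2) (j+4) (by omega) (by omega)
  have w0 := zw j (by omega) (by omega)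
  have w1 := zw (j+1) (by omega) (by omega)
  have w3 := zw (j+3) (by omega) (by omega)
  have w4 := zw (j+4) (by omega) (by omega)
  have y0 := zy j (by omega)
  have y1 := zy (j+1) (by omega)
  have y2 := zy (j+2) (by omega)
  have y3 := zy (j+3) (by omega)
  have y4 := zy (j+4) (by omega)
  have zc : z (j+2) = x (j+1) := zx (j+1) (by omega)
  rw [← zc] at hwx
  have hz2 : W G (d - (j+1)) (z (j+2)) (x d) := by rw [zc]; exact h.toT _ (by omega)
  clear zn zw zy zadj zx zS hz
  simp only [show j + 1 + 1 = j + 2 by omega, show j + 2 + 1 = j + 3 by omega,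
    show j + 3 + 1 = j + 4 by omega] at *
  generalize z j = p0 at *
  generalize z (j+1) = p1 at *
  generalize z (j+2) = p2 at *
  generalize z (j+3) = p3 at *
  generalize z (j+4) = p4 at *
  have := h.lc ![p2, p1, p3, w, p0, p4, y] ?_ _ h.xd _ hz2
  · omega
  · intro a b
    rw [lcAdj]
    have hc : ∀ {s t : V}, ¬ G.Adj s t → ¬ G.Adj t s := fun h h' => h h'.symm
    fin_cases a <;> fin_cases b <;>
      simp [a01, a12, a23, a34, a01.symm, a12.symm, a23.symm, a34.symm, n02, n03, n04, n13, n14,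
        n24, hc n02, hc n03, hc n04, hc n13, hc n14, hc n24, w0, w1, w3, w4, hc w0, hc w1, hc w3,
        hc w4, y0, y1, y2, y3, y4, hc y0, hc y1, hc y2, hc y3, hc y4, hwx, hwx.symm, hwy, hwy.symm]

theorem Cfg.claim6 (h : Cfg G J T d x) (i : ℕ) (hi : 1 ≤ i) (hi' : i ≤ d - 1) (w y : V)
    (hwS : w ∉ J ∪ T ∪ Sp d x) (hwx : G.Adj w (x i)) (hwy : G.Adj w y) : y = x i := by
  by_cases hy : y ∈ J ∪ T ∪ Sp d x
  · exact h.claim3 i hi hi' w y hwS hwx hy hwy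
  · exact (h.claim5 i hi hi' w y hwS hwx hy hwy).elim

end

instance : DecidableRel longClawGraph.Adj := fun a b => decidable_of_iff _ (lcAdj a b).symm

theorem chain_of_near {V : Type} {m : ℕ} {G : SimpleGraph V} {S : Set V} {H : SimpleGraph (Fin m)}
    (φ : H ≃g G.induce S) (o : Fin m)
    (hH : ∀ a, a = o ∨ H.Adj a o ∨ (∃ c, H.Adj a c ∧ H.Adj c o)) :
    ∀ a ∈ S, ∀ b ∈ S, W (res G S) 4 a b := by
  have key : ∀ a b, H.Adj a b → W (res G S) 1 (φ a).1 (φ b).1 := fun a b h =>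
    W.adj ⟨φ.map_rel_iff.2 h, (φ a).2, (φ b).2⟩
  have key1 : ∀ a, W (res G S) 2 (φ a).1 (φ o).1 := by
    intro a
    rcases hH a with rfl | h | ⟨c, h1, h2⟩
    · exact W.refl _ _ _
    · exact (key _ _ h).mono (by omega)
    · exact (key _ _ h1).trans (key _ _ h2)
  intro a ha b hb
  have := (key1 (φ.symm ⟨a, ha⟩)).trans (key1 (φ.symm ⟨b, hb⟩)).symm
  simpa using this

theorem nbr_of {V : Type} {m : ℕ} {G : SimpleGraph V} {S : Set V} {H : SimpleGraph (Fin m)}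
    (φ : H ≃g G.induce S) (hH : ∀ a, ∃ b, H.Adj a b) : ∀ a ∈ S, ∃ b ∈ S, G.Adj a b := by
  intro a ha
  obtain ⟨b, hb⟩ := hH (φ.symm ⟨a, ha⟩)
  have h2 := φ.map_rel_iff.2 hb
  rw [RelIso.apply_symm_apply] at h2
  exact ⟨(φ b).1, (φ b).2, h2⟩

noncomputable def isoRange {V U : Type} {G : SimpleGraph V} {H : SimpleGraph U} (e : H ↪g G) :
    H ≃g G.induce (Set.range e) where
  toEquiv := Equiv.ofInjective e e.injective
  map_rel_iff' := by
    intro a b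
    exact e.map_rel_iff

theorem tri_near (a b : Fin 3) : a = b ∨ triangleGraph.Adj a b := by
  simp only [triangleGraph, top_adj]; exact em _

theorem c4Adj (a b : Fin 4) : (cycleGraph 4).Adj a b ↔ (a.val + 1 = b.val ∨ b.val + 1 = a.val ∨
      (a.val = 0 ∧ b.val = 3) ∨ (b.val = 0 ∧ a.val = 3)) := by
  rw [cycleGraph_adj', Fin.sub_def, Fin.sub_def]
  have ha := a.isLt
  have hb := b.isLt
  dsimp only
  omega

theorem mkCfg {V : Type} (G : SimpleGraph V)
    (hC : ∀ j, 5 ≤ j → j ≤ 10 → ¬ ContainsInduced G (SimpleGraph.cycleGraph j))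
    (Js Ts : Set V)
    (hJ : Nonempty (longClawGraph ≃g G.induce Js) ∨
      Nonempty (triangleGraph ≃g G.induce Js))
    (hT : Nonempty (SimpleGraph.cycleGraph 4 ≃g G.induce Ts))
    (d : ℕ) (hd : eSetDist G Js Ts = (d : ℕ∞)) (hd2 : 2 ≤ d)
    (hclosest : ∀ J T : Set V,
      (Nonempty (longClawGraph ≃g G.induce J) ∨
        Nonempty (triangleGraph ≃g G.induce J)) →
      Nonempty (SimpleGraph.cycleGraph 4 ≃g G.induce T) → eSetDist G J T < ⊤ →
      (d : ℕ∞) ≤ eSetDist G J T)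
    (u v : V) (hu : u ∈ Js) (hv : v ∈ Ts)
    (p : G.Walk u v) (hlen : p.length = d) : Cfg G Js Ts d p.getVert := by
  have hle : ∀ (J T : Set V) (s t : V) (n : ℕ), s ∈ J → t ∈ T → W G n s t →
      eSetDist G J T ≤ n := by
    rintro J T s t n hs ht ⟨q, hq⟩
    refine le_trans (iInf₂_le_of_le s hs (iInf₂_le t ht)) ?_
    exact le_trans (edist_le q) (by exact_mod_cast hq)
  have hcl : ∀ (J T : Set V), (Nonempty (longClawGraph ≃g G.induce J) ∨
        Nonempty (triangleGraph ≃g G.induce J)) →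
      Nonempty (SimpleGraph.cycleGraph 4 ≃g G.induce T) →
      ∀ (s t : V) (n : ℕ), s ∈ J → t ∈ T → W G n s t → d ≤ n := by
    intro J T h1 h2 s t n hs ht hw
    have h3 := hle J T s t n hs ht hw
    have h4 := hclosest J T h1 h2 (lt_of_le_of_lt h3 (ENat.natCast_lt_top n))
    exact_mod_cast h4.trans h3
  refine ⟨hC, hd2, ?_, ?_, ?_, ?_, ?_, ?_, ?_, ?_, ?_, ?_, ?_⟩
  · intro i hi
    exact p.adj_getVert_succ (by omega)
  · simpa using hu
  · rw [← hlen]; simpa using hv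
  · intro s hs t ht n hw
    exact hcl Js Ts hJ hT s t n hs ht hw
  · rcases hJ with ⟨⟨φ⟩⟩ | ⟨⟨φ⟩⟩
    · refine chain_of_near φ 0 ?_
      decide
    · refine chain_of_near φ 0 (fun a => ?_)
      rcases tri_near a 0 with h | h
      · exact Or.inl h
      · exact Or.inr (Or.inl h)
  · obtain ⟨φ⟩ := hT
    refine chain_of_near φ 0 ?_
    simp only [c4Adj]
    decide
  · rcases hJ with ⟨⟨φ⟩⟩ | ⟨⟨φ⟩⟩
    · refine nbr_of φ ?_
      simp only [lcAdj]
      decide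
    · refine nbr_of φ ?_
      simp only [triangleGraph, top_adj]
      decide
  · obtain ⟨φ⟩ := hT
    refine nbr_of φ ?_
    simp only [c4Adj]
    decide
  · intro a b c h1 h2 h3 t ht n hw
    have hf : ∀ i j, G.Adj (![a, b, c] i) (![a, b, c] j) ↔ triangleGraph.Adj i j := by
      intro i j
      simp only [triangleGraph, top_adj]
      fin_cases i <;> fin_cases j <;> simp [h1, h2, h3, h1.symm, h2.symm, h3.symm]
    have hinj : Function.Injective ![a, b, c] := by
      intro i j hij
      by_contra hne
      have : G.Adj (![a, b, c] i) (![a, b, c] j) := (hf i j).2 (by simpa [triangleGraph] using hne)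
      rw [hij] at this
      exact G.loopless.irrefl _ this
    let e : triangleGraph ↪g G := ⟨⟨![a, b, c], hinj⟩, fun {i j} => hf i j⟩
    exact hcl (Set.range e) Ts (Or.inr ⟨isoRange e⟩) hT a t n ⟨0, rfl⟩ ht hw
  · intro a b c e h1 h2 h3 h4 h5 h6 h7 h8 s hs n hw
    have h5' : ¬ G.Adj c a := fun h => h5 h.symm
    have h6' : ¬ G.Adj e b := fun h => h6 h.symm
    have hf : ∀ i j, G.Adj (![a, b, c, e] i) (![a, b, c, e] j) ↔ (cycleGraph 4).Adj i j := by
      intro i j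
      rw [c4Adj]
      fin_cases i <;> fin_cases j <;>
        simp [h1, h2, h3, h4, h5, h6, h5', h6', h1.symm, h2.symm, h3.symm, h4.symm]
    have hinj : Function.Injective ![a, b, c, e] := by
      intro i j hij
      revert hij
      fin_cases i <;> fin_cases j <;>
        simp [h1.ne, h2.ne, h3.ne, h4.ne, h7, h8, h1.ne.symm, h2.ne.symm, h3.ne.symm, h4.ne.symm,
          h7.symm, h8.symm]
    let f : cycleGraph 4 ↪g G := ⟨⟨![a, b, c, e], hinj⟩, fun {i j} => hf i j⟩
    exact hcl Js (Set.range f) hJ ⟨isoRange f⟩ s a n hs ⟨0, rfl⟩ hw.symm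
  · intro f hf t ht n hw
    have hinj : Function.Injective f := by
      intro i j hij
      have h1 : ∀ k, longClawGraph.Adj i k ↔ longClawGraph.Adj j k := by
        intro k
        rw [← hf, ← hf, hij]
      have hdec : ∀ i j, (∀ k, longClawGraph.Adj i k ↔ longClawGraph.Adj j k) → i = j := by
        decide
      exact hdec i j h1
    let e : longClawGraph ↪g G := ⟨⟨f, hinj⟩, fun {i j} => hf i j⟩
    exact hcl (Set.range e) Ts (Or.inl ⟨isoRange e⟩) hT (f 0) t n ⟨0, rfl⟩ ht hw

end S15

theorem stmt15 {V : Type} [Fintype V] (G : SimpleGraph V)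
    (hC : ∀ j, 5 ≤ j → j ≤ 10 → ¬ ContainsInduced G (SimpleGraph.cycleGraph j))
    (Js Ts : Set V)
    (hJ : Nonempty (longClawGraph ≃g G.induce Js) ∨
      Nonempty (triangleGraph ≃g G.induce Js))
    (hT : Nonempty (SimpleGraph.cycleGraph 4 ≃g G.induce Ts))
    (d : ℕ) (hd : eSetDist G Js Ts = (d : ℕ∞)) (hd2 : 2 ≤ d)
    (hclosest : ∀ J T : Set V,
      (Nonempty (longClawGraph ≃g G.induce J) ∨
        Nonempty (triangleGraph ≃g G.induce J)) →
      Nonempty (SimpleGraph.cycleGraph 4 ≃g G.induce T) → eSetDist G J T < ⊤ →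
      (d : ℕ∞) ≤ eSetDist G J T)
    (u v : V) (hu : u ∈ Js) (hv : v ∈ Ts)
    (p : G.Walk u v) (hp : p.IsPath) (hlen : p.length = d)
    (hx1 : p.getVert 1 ∈ (Js ∪ Ts)ᶜ) :
    -- (a) the spine is contained in the component `C`, and every other vertex of `C`
    -- has exactly one neighbor in `G`, and that neighbor lies on the spine
    ({w : V | ∃ i, 1 ≤ i ∧ i ≤ d - 1 ∧ w = p.getVert i} ⊆
        Subtype.val ''
          ((G.induce (Js ∪ Ts)ᶜ).connectedComponentMk ⟨p.getVert 1, hx1⟩).supp) ∧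
    (∀ w ∈ Subtype.val ''
        ((G.induce (Js ∪ Ts)ᶜ).connectedComponentMk ⟨p.getVert 1, hx1⟩).supp,
      w ∉ {w : V | ∃ i, 1 ≤ i ∧ i ≤ d - 1 ∧ w = p.getVert i} →
      ∃ i, 1 ≤ i ∧ i ≤ d - 1 ∧ G.Adj w (p.getVert i) ∧
        ∀ y, G.Adj w y → y = p.getVert i) ∧
    -- (b) the only edges of `G` between `C` and `Js ∪ Ts` are `{u, x 1}` and `{x (d-1), v}`
    (∀ w ∈ Subtype.val ''
        ((G.induce (Js ∪ Ts)ᶜ).connectedComponentMk ⟨p.getVert 1, hx1⟩).supp,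
      ∀ y ∈ Js ∪ Ts,
        (G.Adj w y ↔ ((w = p.getVert 1 ∧ y = u) ∨ (w = p.getVert (d - 1) ∧ y = v)))) := by
  have h := S15.mkCfg G hC Js Ts hJ hT d hd hd2 hclosest u v hu hv p hlen
  have hx0 : p.getVert 0 = u := p.getVert_zero
  have hxd : p.getVert d = v := by rw [← hlen]; exact p.getVert_length
  clear hclosest hd hJ hT hC
  generalize hx : p.getVert = x at *
  have hout : ∀ i, 1 ≤ i → i ≤ d - 1 → x i ∈ (Js ∪ Ts)ᶜ := by
    rintro i h1 h2 (h3 | h3)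
    · exact h.spJ i h1 h2 h3
    · exact h.spT i h1 h2 h3
  have hstr : ∀ w ∈ Subtype.val ''
        ((G.induce (Js ∪ Ts)ᶜ).connectedComponentMk ⟨x 1, hx1⟩).supp,
      w ∉ Js ∪ Ts ∧ (w ∈ S15.Sp d x ∨ ∃ i, 1 ≤ i ∧ i ≤ d - 1 ∧ G.Adj w (x i)) := by
    rintro w ⟨⟨w', hw'⟩, hr, rfl⟩
    refine ⟨hw', ?_⟩
    rw [ConnectedComponent.mem_supp_iff, ConnectedComponent.eq] at hr
    obtain ⟨q⟩ := hr.symm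
    have hind : ∀ (a b : ((Js ∪ Ts)ᶜ : Set V)) (q : (G.induce (Js ∪ Ts)ᶜ).Walk a b),
        (a.1 ∈ S15.Sp d x ∨ ∃ i, 1 ≤ i ∧ i ≤ d - 1 ∧ G.Adj a.1 (x i)) →
        (b.1 ∈ S15.Sp d x ∨ ∃ i, 1 ≤ i ∧ i ≤ d - 1 ∧ G.Adj b.1 (x i)) := by
      intro a b q
      induction q with
      | nil => exact id
      | @cons a c b hac q ih =>
        intro ha
        have hac' : G.Adj a.1 c.1 := hac
        apply ih
        by_cases haS : a.1 ∈ S15.Sp d x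
        · obtain ⟨i, h1, h2, h3⟩ := haS
          exact Or.inr ⟨i, h1, h2, h3 ▸ hac'.symm⟩
        · rcases ha with ha | ⟨i, h1, h2, h3⟩
          · exact absurd ha haS
          · left
            have hn : a.1 ∉ Js ∪ Ts ∪ S15.Sp d x := by
              rintro (h' | h')
              · exact a.2 h'
              · exact haS h'
            exact ⟨i, h1, h2, h.claim6 i h1 h2 _ _ hn h3 hac'⟩
    exact hind _ _ q (Or.inl ⟨1, le_rfl, by omega, rfl⟩)
  have hpend : ∀ w ∈ Subtype.val ''
        ((G.induce (Js ∪ Ts)ᶜ).connectedComponentMk ⟨x 1, hx1⟩).supp,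
      w ∉ S15.Sp d x → ∃ i, 1 ≤ i ∧ i ≤ d - 1 ∧ G.Adj w (x i) ∧
        ∀ y, G.Adj w y → y = x i := by
    intro w hw hwS
    obtain ⟨h1, h2⟩ := hstr w hw
    rcases h2 with h2 | ⟨i, hi, hi', h3⟩
    · exact absurd h2 hwS
    · have hn : w ∉ Js ∪ Ts ∪ S15.Sp d x := by
        rintro (h' | h')
        · exact h1 h'
        · exact hwS h'
      exact ⟨i, hi, hi', h3, fun y hy => h.claim6 i hi hi' _ _ hn h3 hy⟩
  refine ⟨?_, hpend, ?_⟩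
  · rintro w ⟨i, hi, hi', rfl⟩
    refine ⟨⟨x i, hout i hi hi'⟩, ?_, rfl⟩
    rw [ConnectedComponent.mem_supp_iff, ConnectedComponent.eq]
    induction i, hi using Nat.le_induction with
    | base => exact Reachable.refl _
    | succ k hk ih =>
      refine Reachable.trans (Adj.reachable ?_) (ih (by omega))
      exact (h.adj k (by omega)).symm
  · intro w hw y hy
    constructor
    · intro ha
      by_cases hwS : w ∈ S15.Sp d x
      · obtain ⟨i, hi, hi', rfl⟩ := hwS
        rcases hy with hy | hy
        · obtain ⟨rfl, h2⟩ := h.claim1 i hi hi' y hy ha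
          exact Or.inl ⟨rfl, h2.trans hx0⟩
        · obtain ⟨rfl, h2⟩ := h.claim2 i hi hi' y hy ha
          exact Or.inr ⟨rfl, h2.trans hxd⟩
      · obtain ⟨i, hi, hi', -, h3⟩ := hpend w hw hwS
        rw [h3 y ha] at hy
        exact absurd hy (hout i hi hi')
    · rintro (⟨rfl, rfl⟩ | ⟨rfl, rfl⟩)
      · rw [← hx0]; exact (h.adj 0 (by omega)).symm
      · have := h.adj (d-1) (by omega)
        rwa [show d - 1 + 1 = d by omega, hxd] at this
end
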